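/- Let G = (V,E) be a bridgeless connected finite multigraph with at least one edge, with |V| = n, |E| = m, and b blocks. Then: (i) (−1)^{m−n+1} F(G,q) > 0 for all real q < 1; (ii) F(G,q) has a root of multiplicity exactly b at q = 1; (iii) (−1)^{m−n+b+1} F(G,q) > 0 for all real q with 1 < q ≤ 32/27. -/

import Mathlib

/-- A finite multigraph on vertex type `V` with edge type `E`: each edge `e` has two
(possibly equal) endpoints `fst e` and `snd e`. -/
structure Multigraph (V E : Type) where
  fst : E → V
  snd : E → V

namespace Multigraph

variable {V E : Type}

/-- `a` and `b` are joined by some edge belonging to the edge set `F`. -/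
def edgeRelOn (G : Multigraph V E) (F : Set E) (a b : V) : Prop :=
  ∃ e ∈ F, (G.fst e = a ∧ G.snd e = b) ∨ (G.fst e = b ∧ G.snd e = a)

/-- Reachability in the spanning subgraph `(V, F)`. -/
def Reach (G : Multigraph V E) (F : Set E) : V → V → Prop :=
  Relation.EqvGen (G.edgeRelOn F)

/-- The setoid on `V` whose classes are the connected components of the
spanning subgraph `(V, F)`. -/
def reachSetoid (G : Multigraph V E) (F : Set E) : Setoid V :=
  Relation.EqvGen.setoid (G.edgeRelOn F)

/-- The number of connected components of the spanning subgraph `(V, F)`. -/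
noncomputable def ncomp (G : Multigraph V E) (F : Set E) : ℕ :=
  Nat.card (Quotient (G.reachSetoid F))

/-- The number of connected components of `G`. -/
noncomputable def numComponents (G : Multigraph V E) : ℕ :=
  G.ncomp Set.univ

/-- `G` is connected. -/
def Connected (G : Multigraph V E) : Prop :=
  G.numComponents = 1

/-- An edge is a bridge if deleting it increases the number of connected components. -/
def IsBridge (G : Multigraph V E) (e : E) : Prop :=
  G.numComponents < G.ncomp {e' | e' ≠ e}

/-- `G` has no bridge. -/
def Bridgeless (G : Multigraph V E) : Prop :=
  ∀ e, ¬ G.IsBridge e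

/-- `G` has no loops. -/
def Loopless (G : Multigraph V E) : Prop :=
  ∀ e, G.fst e ≠ G.snd e

/-- Deleting a set `S` of vertices (and all edges meeting `S`). -/
def deleteVerts (G : Multigraph V E) (S : Set V) :
    Multigraph {v // v ∉ S} {e // G.fst e ∉ S ∧ G.snd e ∉ S} where
  fst := fun e => ⟨G.fst e.1, e.2.1⟩
  snd := fun e => ⟨G.snd e.1, e.2.2⟩

/-- A cut-vertex: a vertex whose deletion increases the number of components. -/
def IsCutVertex (G : Multigraph V E) (x : V) : Prop :=
  G.numComponents < (G.deleteVerts {x}).numComponents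

/-- A graph is non-separable if it has at most one vertex and at most one edge, or it is
connected, loopless and has no cut-vertex. -/
def NonSeparable (G : Multigraph V E) : Prop :=
  (Nat.card V ≤ 1 ∧ Nat.card E ≤ 1) ∨
    (G.Connected ∧ G.Loopless ∧ ∀ x, ¬ G.IsCutVertex x)

/-- The degree of a vertex, counted with edge multiplicity; a loop contributes `2`. -/
noncomputable def degree (G : Multigraph V E) (v : V) : ℕ :=
  Nat.card {e | G.fst e = v} + Nat.card {e | G.snd e = v}

/-- The flow polynomial `F(G,q) = ∑_{E'⊆E} (−1)^{|E|−|E'|} q^{|E'|+c(E')−|V|}`,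
where `c(E')` is the number of connected components of the spanning subgraph `(V,E')`. -/
noncomputable def flowPoly (G : Multigraph V E) [Finite V] [Finite E] : Polynomial ℝ :=
  letI : Fintype E := Fintype.ofFinite E
  ∑ E' : Finset E, (-1 : Polynomial ℝ) ^ (Nat.card E - E'.card) *
    Polynomial.X ^ (E'.card + G.ncomp ↑E' - Nat.card V)

/-- A subgraph of a multigraph: a set of vertices and a set of edges with both
endpoints among those vertices. -/
structure Subgraph (G : Multigraph V E) where
  verts : Set V
  edges : Set E
  fst_mem : ∀ ⦃e⦄, e ∈ edges → G.fst e ∈ verts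
  snd_mem : ∀ ⦃e⦄, e ∈ edges → G.snd e ∈ verts

/-- A subgraph, viewed as a multigraph in its own right. -/
def Subgraph.toMultigraph {G : Multigraph V E} (H : G.Subgraph) :
    Multigraph H.verts H.edges where
  fst := fun e => ⟨G.fst e.1, H.fst_mem e.2⟩
  snd := fun e => ⟨G.snd e.1, H.snd_mem e.2⟩

/-- `H` is a connected component of `G`: its vertex set is the set of vertices reachable
from some vertex, and its edges are all the edges of `G` joining its vertices. -/
def IsComponent {G : Multigraph V E} (H : G.Subgraph) : Prop :=
  (∃ v ∈ H.verts, ∀ u, u ∈ H.verts ↔ G.Reach Set.univ v u) ∧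
    ∀ e, e ∈ H.edges ↔ (G.fst e ∈ H.verts ∧ G.snd e ∈ H.verts)

/-- `H` is a block of `G`: a maximal non-separable subgraph. -/
def IsBlock {G : Multigraph V E} (H : G.Subgraph) : Prop :=
  H.toMultigraph.NonSeparable ∧
    ∀ H' : G.Subgraph, H'.toMultigraph.NonSeparable →
      H.verts ⊆ H'.verts → H.edges ⊆ H'.edges → H' = H

/-- A trivial block: a single vertex and no edges. -/
def Subgraph.IsTrivial {G : Multigraph V E} (H : G.Subgraph) : Prop :=
  (∃ v, H.verts = {v}) ∧ H.edges = ∅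

/-- An orientation of a multigraph: each edge is given a tail and a head,
consistent with its two endpoints. -/
structure Orientation (G : Multigraph V E) where
  tail : E → V
  head : E → V
  consistent : ∀ e, (tail e = G.fst e ∧ head e = G.snd e) ∨
    (tail e = G.snd e ∧ head e = G.fst e)

open Classical in
/-- A `Γ`-flow on an orientation `D`: at every vertex, the sum of the values on
the arcs with that tail equals the sum of the values on the arcs with that head. -/
noncomputable def Orientation.IsFlow {G : Multigraph V E} [Fintype E]
    (D : G.Orientation) {Γ : Type} [AddCommGroup Γ] (φ : E → Γ) : Prop :=
  ∀ v : V, ∑ e ∈ Finset.univ.filter (fun e => D.tail e = v), φ e =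
    ∑ e ∈ Finset.univ.filter (fun e => D.head e = v), φ e

/-- Deleting an edge. -/
def deleteEdge (G : Multigraph V E) (e₀ : E) : Multigraph V {e // e ≠ e₀} where
  fst := fun e => G.fst e.1
  snd := fun e => G.snd e.1

/-- Adding a new edge joining `x` and `y`. -/
def addEdge (G : Multigraph V E) (x y : V) : Multigraph V (E ⊕ Unit) where
  fst := Sum.elim G.fst fun _ => x
  snd := Sum.elim G.snd fun _ => y

/-- Contracting a set `F` of edges: vertices joined through `F` are identified,
and the edges of `F` are removed. -/
def contract (G : Multigraph V E) (F : Set E) :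
    Multigraph (Quotient (G.reachSetoid F)) {e // e ∉ F} where
  fst := fun e => Quotient.mk _ (G.fst e.1)
  snd := fun e => Quotient.mk _ (G.snd e.1)

/-- The number of proper colourings of the vertices of `G` with `n` colours. -/
noncomputable def properColorings (G : Multigraph V E) (n : ℕ) : ℕ :=
  Nat.card {f : V → Fin n // ∀ e, f (G.fst e) ≠ f (G.snd e)}

/-- An isomorphism of multigraphs. -/
structure Iso {V' E' : Type} (G : Multigraph V E) (G' : Multigraph V' E') where
  vmap : V ≃ V'
  emap : E ≃ E'
  ends : ∀ e, (G'.fst (emap e) = vmap (G.fst e) ∧ G'.snd (emap e) = vmap (G.snd e)) ∨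
    (G'.fst (emap e) = vmap (G.snd e) ∧ G'.snd (emap e) = vmap (G.fst e))

open Classical in
/-- Subdividing the edge `e₀`: it is replaced by a path of length two through a new vertex. -/
noncomputable def subdivide (G : Multigraph V E) (e₀ : E) :
    Multigraph (V ⊕ Unit) (E ⊕ Unit) where
  fst := Sum.elim (fun e => Sum.inl (G.fst e)) fun _ => Sum.inr ()
  snd := Sum.elim (fun e => if e = e₀ then Sum.inr () else Sum.inl (G.snd e))
    fun _ => Sum.inl (G.snd e₀)

/-- `G` is a subdivision of `H`. -/
inductive IsSubdivisionOf :
    {V E V' E' : Type} → Multigraph V E → Multigraph V' E' → Prop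
  | of_iso {V E V' E'} {G : Multigraph V E} {H : Multigraph V' E'} :
      Iso G H → IsSubdivisionOf G H
  | step {V E V' E'} {G : Multigraph V E} {H : Multigraph V' E'} (e : E) :
      IsSubdivisionOf G H → IsSubdivisionOf (G.subdivide e) H
  | iso_left {V₁ E₁ V₂ E₂ V' E'} {G₁ : Multigraph V₁ E₁} {G₂ : Multigraph V₂ E₂}
      {H : Multigraph V' E'} :
      Iso G₁ G₂ → IsSubdivisionOf G₂ H → IsSubdivisionOf G₁ H

/-- A multigraph is 3-connected if it has at least 4 vertices and remains connected
after deleting any set of fewer than 3 vertices. -/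
def ThreeConnected (G : Multigraph V E) : Prop :=
  4 ≤ Nat.card V ∧ ∀ S : Set V, S.ncard < 3 → (G.deleteVerts S).Connected

/-- `G` is (isomorphic to) the multigraph `Z_k` with two vertices joined by `k`
parallel edges. -/
def IsZk (G : Multigraph V E) (k : ℕ) : Prop :=
  Nat.card V = 2 ∧ Nat.card E = k ∧ G.Loopless

/-- `G` is essentially 3-connected: a subdivision of a 3-connected graph,
or `Z_k` for some `k ≥ 3`. -/
def EssentiallyThreeConnected (G : Multigraph V E) : Prop :=
  (∃ (V' E' : Type) (H : Multigraph V' E'), H.ThreeConnected ∧ G.IsSubdivisionOf H) ∨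
    ∃ k, 3 ≤ k ∧ G.IsZk k

end Multigraph

/-!
The flow polynomial depends only on the rank function of the cycle matroid, is multiplicative over
the connected components of that matroid, and these are the edge sets of the blocks. So it suffices
that a connected component contributes a simple root at `1` and exactly one change of sign there;
for `q < 1` the sign follows from deletion and contraction alone.

For a connected matroid on at least two elements one inducts. A set that is minimal among the
2-separating sets with at least two elements either is a pair, in parallel or in series, or contains
an element whose deletion and contraction are both connected. The sign of the derivative at `1`
follows directly along this induction. For `1 < q ≤ 32/27` one passes to the multivariate Tutte
polynomial, following Jackson and Sokal: write `q = (1 - a)² (1 + a)` with `-1/3 ≤ a < 0`. The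
interval `[a - 1, a² - 1]` contains the flow weight `-q` and is closed under the operations on edge
weights that replace two parallel edges, or two edges in series, by one.
-/

/-! ### Connectivity of matroids -/

/-- A matroid presented by its rank function on finite sets. It takes values in `ℕ`, unlike
`Matroid.eRk`, because ranks occur below as exponents. Restrictions are not formed: a notion that
depends on a ground set takes that set as an argument. -/
structure RankFunction (α : Type*) [DecidableEq α] where
  rank : Finset α → ℕ
  rank_le_card (A : Finset α) : rank A ≤ A.card
  rank_mono {A B : Finset α} : A ⊆ B → rank A ≤ rank B
  rank_submodular (A B : Finset α) : rank (A ∪ B) + rank (A ∩ B) ≤ rank A + rank B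

namespace RankFunction

variable {α : Type*} [DecidableEq α] {M : RankFunction α} {A B S T X Y : Finset α} {e f : α}

/-- A rank function from the local rank axioms: adding an element raises the rank by at most one,
and by nothing if that is so for a smaller set. -/
def ofInsert (rank : Finset α → ℕ) (rank_empty : rank ∅ = 0)
    (rank_le_rank_insert : ∀ e A, rank A ≤ rank (insert e A))
    (rank_insert_le : ∀ e A, rank (insert e A) ≤ rank A + 1)
    (rank_insert_eq : ∀ e A B, A ⊆ B → rank (insert e A) = rank A → rank (insert e B) = rank B) :
    RankFunction α where
  rank := rank
  rank_le_card A := by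
    induction A using Finset.induction_on with
    | empty => exact rank_empty.le
    | insert e A he ih =>
      rw [Finset.card_insert_of_notMem he]
      exact (rank_insert_le e A).trans (Nat.succ_le_succ ih)
  rank_mono {A B} hAB := by
    rw [← Finset.union_eq_right.mpr hAB]
    clear hAB
    induction B using Finset.induction_on with
    | empty => simp
    | insert e B _ ih =>
      rw [Finset.union_insert]
      exact ih.trans (rank_le_rank_insert e (A ∪ B))
  rank_submodular A B := by
    suffices ∀ C, rank (A ∪ C) + rank (A ∩ B) ≤ rank A + rank (A ∩ B ∪ C) by
      simpa only [Finset.union_eq_right.mpr (Finset.inter_subset_right (s₁ := A))] using this B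
    intro C
    induction C using Finset.induction_on with
    | empty => simp
    | insert e C _ ih =>
      rw [Finset.union_insert, Finset.union_insert]
      have hle := rank_le_rank_insert e (A ∩ B ∪ C)
      have hge := rank_insert_le e (A ∪ C)
      by_cases h : rank (insert e (A ∩ B ∪ C)) = rank (A ∩ B ∪ C)
      · have := rank_insert_eq e _ _ (Finset.union_subset_union_left Finset.inter_subset_left) h
        omega
      · omega

section Rank

variable (M)

@[simp]
lemma rank_empty : M.rank ∅ = 0 := by
  simpa using M.rank_le_card ∅

lemma rank_union_le (A B : Finset α) : M.rank (A ∪ B) ≤ M.rank A + M.rank B :=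
  le_of_add_le_left (M.rank_submodular A B)

lemma rank_le_rank_insert (e : α) (A : Finset α) : M.rank A ≤ M.rank (insert e A) :=
  M.rank_mono (Finset.subset_insert e A)

lemma rank_singleton_le_rank_insert (e : α) (A : Finset α) : M.rank {e} ≤ M.rank (insert e A) :=
  M.rank_mono (by simp)

lemma rank_singleton_le_one (e : α) : M.rank {e} ≤ 1 := by
  simpa using M.rank_le_card {e}

lemma rank_insert_le (e : α) (A : Finset α) : M.rank (insert e A) ≤ M.rank A + 1 := by
  have h := M.rank_union_le {e} A
  rw [Finset.singleton_union] at h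
  have := M.rank_singleton_le_one e
  omega

lemma rank_union_add_rank_le (h : A ⊆ B) (C : Finset α) :
    M.rank (B ∪ C) + M.rank A ≤ M.rank (A ∪ C) + M.rank B := by
  have hsub := M.rank_submodular (A ∪ C) B
  have hinter := M.rank_mono (Finset.subset_inter (Finset.subset_union_left (s₂ := C)) h)
  rw [Finset.union_right_comm, Finset.union_eq_right.mpr h] at hsub
  omega

lemma rank_insert_add_rank_le (h : A ⊆ B) (e : α) :
    M.rank (insert e B) + M.rank A ≤ M.rank (insert e A) + M.rank B := by
  simpa only [Finset.union_singleton] using M.rank_union_add_rank_le h {e}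

/-- Contraction of the element `e`, as a matroid on the same type; in it `e` has become a loop. -/
def contract (e : α) : RankFunction α where
  rank A := M.rank (insert e A) - M.rank {e}
  rank_le_card A := by
    have h := M.rank_union_le {e} A
    rw [Finset.singleton_union] at h
    have := M.rank_le_card A
    omega
  rank_mono h := Nat.sub_le_sub_right (M.rank_mono (Finset.insert_subset_insert e h)) _
  rank_submodular A B := by
    have h := M.rank_submodular (insert e A) (insert e B)
    rw [← Finset.insert_union_distrib, ← Finset.insert_inter_distrib] at h
    have := M.rank_singleton_le_rank_insert e A
    have := M.rank_singleton_le_rank_insert e B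
    have := M.rank_singleton_le_rank_insert e (A ∩ B)
    have := M.rank_singleton_le_rank_insert e (A ∪ B)
    omega

lemma rank_contract_add (e : α) (A : Finset α) :
    (M.contract e).rank A + M.rank {e} = M.rank (insert e A) :=
  Nat.sub_add_cancel (M.rank_singleton_le_rank_insert e A)

end Rank

/-- `X` is a union of connected components of the restriction to `S`. -/
def IsSeparator (M : RankFunction α) (S X : Finset α) : Prop :=
  X ⊆ S ∧ M.rank X + M.rank (S \ X) ≤ M.rank S

/-- The separation of the restriction to `S` into `X` and `S \ X` has order at most two. -/
def IsTwoSeparating (M : RankFunction α) (S X : Finset α) : Prop :=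
  X ⊆ S ∧ M.rank X + M.rank (S \ X) ≤ M.rank S + 1

/-- The restriction to `S` is a connected matroid. The empty set counts as connected. -/
def Connected (M : RankFunction α) (S : Finset α) : Prop :=
  ∀ X, M.IsSeparator S X → X = ∅ ∨ X = S

lemma IsSeparator.compl (h : M.IsSeparator S X) : M.IsSeparator S (S \ X) :=
  ⟨Finset.sdiff_subset, by rw [Finset.sdiff_sdiff_eq_self h.1, add_comm]; exact h.2⟩

lemma IsTwoSeparating.compl (h : M.IsTwoSeparating S X) : M.IsTwoSeparating S (S \ X) :=
  ⟨Finset.sdiff_subset, by rw [Finset.sdiff_sdiff_eq_self h.1, add_comm]; exact h.2⟩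

lemma isTwoSeparating_self : M.IsTwoSeparating S S :=
  ⟨subset_rfl, by simp⟩

lemma connected_of_forall_mem (he : e ∈ S) (h : ∀ X, M.IsSeparator S X → e ∈ X → X = S) :
    M.Connected S := by
  intro X hX
  by_cases heX : e ∈ X
  · exact .inr (h X hX heX)
  · have := h _ hX.compl (Finset.mem_sdiff.mpr ⟨he, heX⟩)
    rw [Finset.sdiff_eq_self_iff_disjoint, Finset.disjoint_iff_inter_eq_empty,
      Finset.inter_eq_right.mpr hX.1] at this
    exact .inl this

namespace Connected

lemma rank_singleton_erase (hS : M.Connected S) (hcard : 1 < S.card) (he : e ∈ S) :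
    M.rank {e} = 1 ∧ M.rank (S.erase e) = M.rank S := by
  have hnot : ¬ M.IsSeparator S {e} := fun h => by
    rcases hS _ h with h | rfl <;> simp at *
  have hlt : M.rank S < M.rank {e} + M.rank (S.erase e) := by
    rw [← Finset.sdiff_singleton_eq_erase]
    exact lt_of_not_ge fun h => hnot ⟨Finset.singleton_subset_iff.mpr he, h⟩
  have := M.rank_singleton_le_one e
  have := M.rank_mono (Finset.erase_subset e S)
  omega

/-- Uncrossing: if the order of the separation at `X ∪ Y` is at least two, submodularity leaves
order at most two for `X ∩ Y`. -/
lemma isTwoSeparating_inter (hS : M.Connected S) (hX : M.IsTwoSeparating S X)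
    (hY : M.IsTwoSeparating S Y) (hne : X.Nonempty) (hXY : X ∪ Y ≠ S) :
    M.IsTwoSeparating S (X ∩ Y) := by
  have hin := M.rank_submodular X Y
  have hout := M.rank_submodular (S \ X) (S \ Y)
  rw [← Finset.sdiff_inter_distrib_right, ← Finset.sdiff_union_distrib] at hout
  have hunion : M.rank S < M.rank (X ∪ Y) + M.rank (S \ (X ∪ Y)) := by
    refine lt_of_not_ge fun h => ?_
    rcases hS _ ⟨Finset.union_subset hX.1 hY.1, h⟩ with h | h
    · exact (hne.mono Finset.subset_union_left).ne_empty h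
    · exact hXY h
  exact ⟨Finset.inter_subset_left.trans hX.1, by have := hX.2; have := hY.2; omega⟩

lemma exists_isTwoSeparating_of_not_connected (hS : M.Connected S) (hcard : 1 < S.card)
    (he : e ∈ S) (hnot : ¬ (M.Connected (S.erase e) ∧ (M.contract e).Connected (S.erase e))) :
    ∃ U, e ∉ U ∧ U.Nonempty ∧ (S \ insert e U).Nonempty ∧
      M.IsTwoSeparating S U ∧ M.IsTwoSeparating S (insert e U) := by
  obtain ⟨hrank, herase⟩ := hS.rank_singleton_erase hcard he
  have key : ∃ U ⊆ S.erase e, U ≠ ∅ ∧ U ≠ S.erase e ∧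
      (M.rank U + M.rank (S.erase e \ U) ≤ M.rank S ∨
        M.rank (insert e U) + M.rank (insert e (S.erase e \ U)) ≤ M.rank S + 1) := by
    by_contra! h
    refine hnot ⟨fun U hU => ?_, fun U hU => ?_⟩ <;> by_contra! hne
    · have := (h U hU.1 hne.1 hne.2).1
      have := hU.2
      omega
    · have := (h U hU.1 hne.1 hne.2).2
      have := hU.2
      have := M.rank_contract_add e U
      have := M.rank_contract_add e (S.erase e \ U)
      have := M.rank_contract_add e (S.erase e)
      rw [Finset.insert_erase he] at this
      omega
  obtain ⟨U, hU, hne, hne', hle⟩ := key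
  have heU : e ∉ U := fun h => Finset.notMem_erase e S (hU h)
  have hUS : U ⊆ S := hU.trans (Finset.erase_subset e S)
  have hout : S \ insert e U = S.erase e \ U := by grind
  have hout' : S \ U = insert e (S.erase e \ U) := by grind
  have := M.rank_insert_le e U
  have := M.rank_insert_le e (S.erase e \ U)
  have := M.rank_le_rank_insert e U
  have := M.rank_le_rank_insert e (S.erase e \ U)
  refine ⟨U, heU, Finset.nonempty_iff_ne_empty.mpr hne, ?_, ⟨hUS, ?_⟩,
    ⟨Finset.insert_subset he hUS, ?_⟩⟩
  · rw [hout, Finset.sdiff_nonempty]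
    exact fun h => hne' (hU.antisymm h)
  · rw [hout']
    omega
  · rw [hout]
    omega

end Connected

section MinimalTwoSeparating

variable (hX : Minimal (fun X => M.IsTwoSeparating S X ∧ 1 < X.card) X) (hXcard : 2 < X.card)
  (heX : e ∈ X) (heY : e ∉ Y) (hY : M.IsTwoSeparating S Y) (hY' : M.IsTwoSeparating S (insert e Y))

include hX

lemma card_le_one_of_minimal (hlt : Y ⊂ X) (hY : M.IsTwoSeparating S Y) : Y.card ≤ 1 := by
  by_contra! h
  exact hX.not_prop_of_lt hlt ⟨hY, h⟩

include hXcard heX heY hY hY'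

lemma not_subset_of_minimal (hne : Y.Nonempty) : ¬ Y ⊆ X := by
  intro hYX
  have hcard : Y.card ≤ 1 := card_le_one_of_minimal hX
    (hYX.ssubset_of_not_subset fun h => heY (h heX)) hY
  have hcard' : (insert e Y).card = Y.card + 1 := Finset.card_insert_of_notMem heY
  have hss : insert e Y ⊂ X := (Finset.insert_subset heX hYX).ssubset_of_ne <| by
    rintro rfl
    omega
  have := card_le_one_of_minimal hX hss hY'
  have := hne.card_pos
  omega

lemma disjoint_of_minimal (hS : M.Connected S) (hXY : X ∪ Y ≠ S) : Disjoint X Y := by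
  have hss : X ∩ Y ⊂ X :=
    Finset.inter_subset_left.ssubset_of_not_subset fun h => heY (Finset.mem_inter.mp (h heX)).2
  have hcard : (X ∩ Y).card ≤ 1 := card_le_one_of_minimal hX hss
    (hS.isTwoSeparating_inter hX.prop.1 hY ⟨e, heX⟩ hXY)
  have hinter : X ∩ insert e Y = insert e (X ∩ Y) := Finset.inter_insert_of_mem heX
  have hcard' : (X ∩ insert e Y).card = (X ∩ Y).card + 1 := by
    rw [hinter, Finset.card_insert_of_notMem (by simp [heY])]
  have hss' : X ∩ insert e Y ⊂ X := Finset.inter_subset_left.ssubset_of_ne fun h => by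
    rw [h] at hcard'
    omega
  have := card_le_one_of_minimal hX hss' <| hS.isTwoSeparating_inter hX.prop.1 hY' ⟨e, heX⟩ <| by
    rwa [Finset.union_insert, Finset.insert_eq_of_mem (Finset.mem_union_left Y heX)]
  rw [Finset.disjoint_iff_inter_eq_empty, ← Finset.card_eq_zero]
  omega

end MinimalTwoSeparating

/-- The element `e` may be any member of a minimal 2-separating set with at least two elements: if
such a set has more than two elements, both sides of the separation at `e` would avoid it. -/
theorem Connected.exists_pair_or_removable (hS : M.Connected S) (hcard : 1 < S.card) :
    (∃ e f, e ≠ f ∧ M.IsTwoSeparating S {e, f}) ∨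
      ∃ e ∈ S, M.Connected (S.erase e) ∧ (M.contract e).Connected (S.erase e) := by
  obtain ⟨X, -, hX⟩ := exists_minimal_le_of_wellFoundedLT
    (fun X => M.IsTwoSeparating S X ∧ 1 < X.card) S ⟨isTwoSeparating_self, hcard⟩
  by_cases hX2 : X.card = 2
  · obtain ⟨e, f, hef, rfl⟩ := Finset.card_eq_two.mp hX2
    exact .inl ⟨e, f, hef, hX.prop.1⟩
  have hX3 : 2 < X.card := by have := hX.prop.2; omega
  obtain ⟨e, heX⟩ : X.Nonempty := Finset.card_pos.mp (by omega)
  have heS : e ∈ S := hX.prop.1.1 heX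
  refine .inr ⟨e, heS, ?_⟩
  by_contra hnot
  obtain ⟨U, heU, hU, hT, hsep, hsep'⟩ :=
    hS.exists_isTwoSeparating_of_not_connected hcard heS hnot
  set T := S \ insert e U with hTdef
  have heT : e ∉ T := by simp [hTdef]
  have hT' : S \ U = insert e T := by grind
  have hsepT : M.IsTwoSeparating S T := hsep'.compl
  have hsepT' : M.IsTwoSeparating S (insert e T) := hT' ▸ hsep.compl
  have hXU : Disjoint X U := disjoint_of_minimal hX hX3 heX heU hsep hsep' hS fun h =>
    not_subset_of_minimal hX hX3 heX heT hsepT hsepT' hT (by grind)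
  have hXT : Disjoint X T := disjoint_of_minimal hX hX3 heX heT hsepT hsepT' hS fun h =>
    not_subset_of_minimal hX hX3 heX heU hsep hsep' hU (by have := hsep.1; grind)
  have hXe : X ⊆ {e} := by
    intro x hx
    have := hX.prop.1.1 hx
    have := Finset.disjoint_left.mp hXU hx
    have := Finset.disjoint_left.mp hXT hx
    grind
  have := Finset.card_le_card hXe
  rw [Finset.card_singleton] at this
  omega

/-- `e` and `f` are parallel nonloops. -/
structure Parallel (M : RankFunction α) (e f : α) : Prop where
  rank_left : M.rank {e} = 1
  rank_right : M.rank {f} = 1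
  rank_pair : M.rank {e, f} = 1

/-- `{e, f}` is a cocircuit of the restriction to `insert f (insert e T)`. -/
structure Series (M : RankFunction α) (T : Finset α) (e f : α) : Prop where
  rank_insert_left : M.rank (insert e T) = M.rank T + 1
  rank_insert_right : M.rank (insert f T) = M.rank T + 1
  rank_insert_insert : M.rank (insert f (insert e T)) = M.rank T + 1

lemma Parallel.symm (h : M.Parallel e f) : M.Parallel f e :=
  ⟨h.rank_right, h.rank_left, by rw [Finset.pair_comm, h.rank_pair]⟩

lemma Parallel.rank_insert_insert (h : M.Parallel e f) (A : Finset α) :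
    M.rank (insert f (insert e A)) = M.rank (insert e A) := by
  have := M.rank_insert_add_rank_le (A := {e}) (B := insert e A) (by simp) f
  rw [Finset.pair_comm, h.rank_left, h.rank_pair] at this
  have := M.rank_le_rank_insert f (insert e A)
  omega

lemma Series.rank_insert_of_subset (h : M.Series T e f) (hA : A ⊆ T) :
    M.rank (insert e A) = M.rank A + 1 ∧ M.rank (insert f A) = M.rank A + 1 := by
  have := M.rank_insert_add_rank_le hA e
  have := M.rank_insert_add_rank_le hA f
  have := M.rank_insert_le e A
  have := M.rank_insert_le f A
  have := h.rank_insert_left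
  have := h.rank_insert_right
  omega

lemma Series.rank_right (h : M.Series T e f) : M.rank {f} = 1 := by
  simpa using (h.rank_insert_of_subset (Finset.empty_subset T)).2

namespace Connected

lemma parallel_or_series (hS : M.Connected (insert f (insert e T))) (heT : e ∉ T)
    (hfT : f ∉ insert e T) (hT : T.Nonempty)
    (hpair : M.IsTwoSeparating (insert f (insert e T)) {e, f}) :
    M.Parallel e f ∨ M.Series T e f := by
  have hcard : 1 < (insert f (insert e T)).card := by
    rw [Finset.card_insert_of_notMem hfT, Finset.card_insert_of_notMem heT]
    omega
  obtain ⟨he, he'⟩ := hS.rank_singleton_erase hcard (e := e) (by simp)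
  obtain ⟨hf, hf'⟩ := hS.rank_singleton_erase hcard (e := f) (by simp)
  have hTe : (insert f (insert e T)).erase e = insert f T := by grind
  have hTf : (insert f (insert e T)).erase f = insert e T := by grind
  have hTef : insert f (insert e T) \ {e, f} = T := by grind
  have hle := hpair.2
  rw [hTe] at he'
  rw [hTf] at hf'
  rw [hTef] at hle
  by_cases hef : M.rank {e, f} = 1
  · exact .inl ⟨he, hf, hef⟩
  · have := M.rank_insert_le e T
    have := M.rank_insert_le f T
    have := M.rank_singleton_le_rank_insert e {f}
    exact .inr ⟨by omega, by omega, by omega⟩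

lemma of_parallel (hS : M.Connected (insert f (insert e T))) (hfT : f ∉ insert e T)
    (hef : M.Parallel e f) :
    M.Connected (insert e T) := by
  refine connected_of_forall_mem (Finset.mem_insert_self e T) fun X hX heX => ?_
  have hfX : f ∉ X := fun h => hfT (hX.1 h)
  have hdiff : insert f (insert e T) \ insert f X = insert e T \ X := by grind
  have hsep : M.IsSeparator (insert f (insert e T)) (insert f X) := by
    refine ⟨Finset.insert_subset_insert f hX.1, ?_⟩
    rw [hdiff, hef.rank_insert_insert, ← Finset.insert_eq_of_mem heX, hef.rank_insert_insert,
      Finset.insert_eq_of_mem heX]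
    exact hX.2
  have heq := (hS _ hsep).resolve_left (Finset.insert_ne_empty f X)
  rw [← Finset.erase_insert hfX, heq, Finset.erase_insert hfT]

lemma contract_of_series (hS : M.Connected (insert f (insert e T))) (hfT : f ∉ insert e T)
    (hef : M.Series T e f) :
    (M.contract f).Connected (insert e T) := by
  refine connected_of_forall_mem (Finset.mem_insert_self e T) fun X hX heX => ?_
  have hfX : f ∉ X := fun h => hfT (hX.1 h)
  have hdiff : insert f (insert e T) \ insert f X = insert e T \ X := by grind
  have hsep : M.IsSeparator (insert f (insert e T)) (insert f X) := by
    refine ⟨Finset.insert_subset_insert f hX.1, ?_⟩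
    have hout := (hef.rank_insert_of_subset (A := insert e T \ X) (by grind)).2
    have := hX.2
    have := M.rank_contract_add f X
    have := M.rank_contract_add f (insert e T \ X)
    have := M.rank_contract_add f (insert e T)
    have := hef.rank_right
    rw [hdiff]
    omega
  have heq := (hS _ hsep).resolve_left (Finset.insert_ne_empty f X)
  rw [← Finset.erase_insert hfX, heq, Finset.erase_insert hfT]

end Connected

theorem Connected.induction {P : RankFunction α → Finset α → Prop}
    (pair : ∀ M e f, e ≠ f → M.Parallel e f → P M {e, f})
    (parallel : ∀ M T e f, e ∉ T → f ∉ insert e T → T.Nonempty → M.Parallel e f →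
      P M (insert e T) → P M (insert f (insert e T)))
    (series : ∀ M T e f, e ∉ T → f ∉ insert e T → M.Series T e f →
      P (M.contract f) (insert e T) → P M (insert f (insert e T)))
    (removable : ∀ M S e, e ∉ S → S.Nonempty → M.rank {e} = 1 → M.rank (insert e S) = M.rank S →
      P M S → P (M.contract e) S → P M (insert e S))
    (hS : M.Connected S) (hcard : 1 < S.card) : P M S := by
  induction hn : S.card generalizing M S with
  | zero => omega
  | succ n ih =>
    by_cases hn1 : n = 1
    · subst hn1
      obtain ⟨e, f, hef, rfl⟩ := Finset.card_eq_two.mp hn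
      obtain ⟨he, he'⟩ := hS.rank_singleton_erase hcard (e := e) (by simp)
      obtain ⟨hf, -⟩ := hS.rank_singleton_erase hcard (e := f) (by simp)
      rw [Finset.erase_insert (by simpa using hef), hf] at he'
      exact pair M e f hef ⟨he, hf, he'.symm⟩
    rcases hS.exists_pair_or_removable hcard with ⟨e, f, hef, hpair⟩ | ⟨e, he, hdel, hcon⟩
    · obtain ⟨he, hf⟩ : e ∈ S ∧ f ∈ S := by simpa [Finset.insert_subset_iff] using hpair.1
      obtain ⟨T, heT, hfT, rfl⟩ : ∃ T, e ∉ T ∧ f ∉ insert e T ∧ S = insert f (insert e T) :=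
        ⟨(S.erase f).erase e, by grind, by grind, by grind⟩
      have hTcard : (insert e T).card = n := by
        rw [Finset.card_insert_of_notMem hfT] at hn
        omega
      have hT : T.Nonempty := by
        rw [Finset.card_insert_of_notMem heT] at hTcard
        exact Finset.card_pos.mp (by omega)
      rcases hS.parallel_or_series heT hfT hT hpair with h | h
      · exact parallel M T e f heT hfT hT h (ih (hS.of_parallel hfT h) (by omega) hTcard)
      · exact series M T e f heT hfT h (ih (hS.contract_of_series hfT h) (by omega) hTcard)
    · obtain ⟨hrank, herase⟩ := hS.rank_singleton_erase hcard he
      have hcard' : (S.erase e).card = n := by rw [Finset.card_erase_of_mem he]; omega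
      rw [← Finset.insert_erase he]
      exact removable M _ e (Finset.notMem_erase e S) (Finset.card_pos.mp (by omega)) hrank
        (by rw [Finset.insert_erase he, herase])
        (ih hdel (by omega) hcard') (ih hcon (by omega) hcard')

end RankFunction

/-! ### The flow polynomial of a matroid -/

namespace RankFunction

variable {α : Type*} [DecidableEq α] {M : RankFunction α} {A B S T : Finset α} {e f : α}

/-- The corank of the restriction to `S`, the cyclomatic number in the case of a graph. -/
def nullity (M : RankFunction α) (S : Finset α) : ℕ :=
  S.card - M.rank S

lemma rank_add_nullity (M : RankFunction α) (S : Finset α) : M.rank S + M.nullity S = S.card :=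
  Nat.add_sub_cancel' (M.rank_le_card S)

@[simp]
lemma nullity_empty (M : RankFunction α) : M.nullity ∅ = 0 := by
  simp [nullity]

lemma nullity_insert (heS : e ∉ S) (h : M.rank (insert e S) = M.rank S) :
    M.nullity (insert e S) = M.nullity S + 1 := by
  have := M.rank_add_nullity S
  have := M.rank_add_nullity (insert e S)
  rw [Finset.card_insert_of_notMem heS] at this
  omega

lemma nullity_insert_coloop (heS : e ∉ S) (h : M.rank (insert e S) = M.rank S + 1) :
    M.nullity (insert e S) = M.nullity S := by
  have := M.rank_add_nullity S
  have := M.rank_add_nullity (insert e S)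
  rw [Finset.card_insert_of_notMem heS] at this
  omega

lemma nullity_contract (heS : e ∉ S) (he : M.rank {e} = 1) :
    (M.contract e).nullity S = M.nullity (insert e S) := by
  have := M.rank_contract_add e S
  have := (M.contract e).rank_add_nullity S
  have := M.rank_add_nullity (insert e S)
  rw [Finset.card_insert_of_notMem heS] at this
  omega

lemma rank_insert_of_loop (he : M.rank {e} = 0) (A : Finset α) :
    M.rank (insert e A) = M.rank A := by
  have := M.rank_insert_add_rank_le (Finset.empty_subset A) e
  rw [insert_empty_eq, he, rank_empty] at this
  have := M.rank_le_rank_insert e A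
  omega

lemma Parallel.rank_contract (h : M.Parallel e f) : (M.contract f).rank {e} = 0 := by
  have := M.rank_contract_add f {e}
  rw [Finset.pair_comm, h.rank_pair, h.rank_right] at this
  omega

/-- No element of `S` is a coloop of the restriction to `S`. -/
def Coloopless (M : RankFunction α) (S : Finset α) : Prop :=
  ∀ e ∈ S, M.rank (S.erase e) = M.rank S

namespace Coloopless

lemma rank_insert (h : M.Coloopless (insert e S)) (heS : e ∉ S) :
    M.rank (insert e S) = M.rank S := by
  have := h e (Finset.mem_insert_self e S)
  rw [Finset.erase_insert heS] at this
  exact this.symm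

lemma rank_insert_erase (h : M.Coloopless (insert e S)) (heS : e ∉ S) (hf : f ∈ S) :
    M.rank (insert e (S.erase f)) = M.rank (insert e S) := by
  rw [← Finset.erase_insert_of_ne (ne_of_mem_of_not_mem hf heS).symm]
  exact h f (Finset.mem_insert_of_mem hf)

lemma contract (h : M.Coloopless (insert e S)) (heS : e ∉ S) : (M.contract e).Coloopless S := by
  intro f hf
  have := M.rank_contract_add e S
  have := M.rank_contract_add e (S.erase f)
  have := h.rank_insert_erase heS hf
  omega

lemma of_insert_loop (h : M.Coloopless (insert e S)) (heS : e ∉ S) (he : M.rank {e} = 0) :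
    M.Coloopless S := by
  intro f hf
  simpa only [rank_insert_of_loop he] using h.rank_insert_erase heS hf

end Coloopless

section FlowPoly

open Polynomial

/-- The flow polynomial of the restriction to `S`, which depends only on the matroid. -/
noncomputable def flowPoly (M : RankFunction α) (S : Finset α) : ℝ[X] :=
  ∑ A ∈ S.powerset, (-1) ^ (S.card - A.card) * X ^ M.nullity A

@[simp]
lemma flowPoly_empty (M : RankFunction α) : M.flowPoly ∅ = 1 := by
  simp [flowPoly]

lemma flowPoly_insert (heS : e ∉ S) :
    M.flowPoly (insert e S) =
      ∑ A ∈ S.powerset, (-1) ^ (S.card - A.card) * X ^ M.nullity (insert e A) - M.flowPoly S := by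
  rw [flowPoly, flowPoly, Finset.sum_powerset_insert heS, add_comm, sub_eq_add_neg,
    ← Finset.sum_neg_distrib]
  congr 1 <;> refine Finset.sum_congr rfl fun A hA => ?_
  · have heA : e ∉ A := fun h => heS (Finset.mem_powerset.mp hA h)
    rw [Finset.card_insert_of_notMem heS, Finset.card_insert_of_notMem heA, Nat.add_sub_add_right]
  · rw [Finset.card_insert_of_notMem heS,
      Nat.sub_add_comm (Finset.card_le_card (Finset.mem_powerset.mp hA)), pow_succ]
    ring

lemma flowPoly_insert_nonloop (heS : e ∉ S) (he : M.rank {e} = 1) :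
    M.flowPoly (insert e S) = (M.contract e).flowPoly S - M.flowPoly S := by
  rw [flowPoly_insert heS]
  congr 1
  refine Finset.sum_congr rfl fun A hA => ?_
  rw [nullity_contract (fun h => heS (Finset.mem_powerset.mp hA h)) he]

lemma flowPoly_insert_loop (heS : e ∉ S) (he : M.rank {e} = 0) :
    M.flowPoly (insert e S) = (X - 1) * M.flowPoly S := by
  rw [flowPoly_insert heS, sub_mul, one_mul]
  congr 1
  rw [flowPoly, Finset.mul_sum]
  refine Finset.sum_congr rfl fun A hA => ?_
  rw [nullity_insert (fun h => heS (Finset.mem_powerset.mp hA h)) (rank_insert_of_loop he A),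
    pow_succ]
  ring

lemma flowPoly_insert_coloop (heS : e ∉ S) (he : M.rank (insert e S) = M.rank S + 1) :
    M.flowPoly (insert e S) = 0 := by
  rw [flowPoly_insert heS, sub_eq_zero]
  refine Finset.sum_congr rfl fun A hA => ?_
  rw [Finset.mem_powerset] at hA
  have := M.rank_insert_add_rank_le hA e
  have := M.rank_insert_le e A
  rw [nullity_insert_coloop (fun h => heS (hA h)) (by omega)]

lemma flowPoly_eq_zero_of_not_coloopless (h : ¬ M.Coloopless S) : M.flowPoly S = 0 := by
  obtain ⟨e, he, hne⟩ : ∃ e ∈ S, M.rank (S.erase e) ≠ M.rank S := by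
    simpa only [Coloopless, not_forall, exists_prop] using h
  have hle := M.rank_insert_le e (S.erase e)
  have hmono := M.rank_mono (Finset.erase_subset e S)
  rw [Finset.insert_erase he] at hle
  rw [← Finset.insert_erase he]
  refine flowPoly_insert_coloop (Finset.notMem_erase e S) ?_
  rw [Finset.insert_erase he]
  omega

theorem Coloopless.flowPoly_sign_of_lt_one {q : ℝ} (hq : q < 1) (hS : M.Coloopless S) :
    0 < (-1) ^ M.nullity S * (M.flowPoly S).eval q := by
  induction S using Finset.induction_on generalizing M with
  | empty => simp
  | insert e T heT ih =>
    rw [nullity_insert heT (hS.rank_insert heT), pow_succ]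
    rcases Nat.eq_zero_or_pos (M.rank {e}) with he | he
    · rw [flowPoly_insert_loop heT he, eval_mul, eval_sub, eval_X, eval_one]
      have := mul_pos (sub_pos.mpr hq) (ih (hS.of_insert_loop heT he))
      linarith
    · have he : M.rank {e} = 1 := le_antisymm (M.rank_singleton_le_one e) he
      have hcon := ih (hS.contract heT)
      rw [nullity_contract heT he, nullity_insert heT (hS.rank_insert heT), pow_succ] at hcon
      have hdel : 0 ≤ (-1) ^ M.nullity T * (M.flowPoly T).eval q := by
        by_cases hT : M.Coloopless T
        · exact (ih hT).le
        · simp [flowPoly_eq_zero_of_not_coloopless hT]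
      rw [flowPoly_insert_nonloop heT he, eval_sub]
      linarith

lemma eval_one_flowPoly (M : RankFunction α) (hS : S.Nonempty) : (M.flowPoly S).eval 1 = 0 := by
  obtain ⟨e, he⟩ := hS
  rw [← Finset.insert_erase he, flowPoly_insert (Finset.notMem_erase e S)]
  simp [flowPoly, eval_finsetSum]

lemma derivative_flowPoly_insert_loop (heS : e ∉ S) (hS : S.Nonempty) (he : M.rank {e} = 0) :
    (derivative (M.flowPoly (insert e S))).eval 1 = 0 := by
  simp [flowPoly_insert_loop heS he, M.eval_one_flowPoly hS]

theorem Connected.derivative_flowPoly_sign (hS : M.Connected S) (hcard : 1 < S.card) :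
    0 < (-1) ^ (M.nullity S + 1) * (derivative (M.flowPoly S)).eval 1 := by
  refine hS.induction
    (P := fun M S => 0 < (-1) ^ (M.nullity S + 1) * (derivative (M.flowPoly S)).eval 1)
    (fun M e f hef hpar => ?_) (fun M T e f heT hfT hT hpar ih => ?_)
    (fun M T e f heT hfT hser ih => ?_) (fun M S e heS _ he hrank hdel hcon => ?_) hcard
  · have hef' : e ∉ ({f} : Finset α) := by simpa using hef
    have hloop : (M.contract e).flowPoly {f} = X - 1 := by
      simpa using flowPoly_insert_loop (Finset.notMem_empty f) hpar.symm.rank_contract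
    have hcoloop : M.flowPoly {f} = 0 := by
      simpa using flowPoly_insert_coloop (M := M) (Finset.notMem_empty f)
        (by simpa using hpar.rank_right)
    rw [nullity, Finset.card_pair hef, hpar.rank_pair, flowPoly_insert_nonloop hef' hpar.rank_left,
      hloop, hcoloop]
    simp
  · rw [nullity_insert hfT (hpar.rank_insert_insert T),
      flowPoly_insert_nonloop hfT hpar.rank_right, derivative_sub, eval_sub,
      derivative_flowPoly_insert_loop heT hT hpar.rank_contract, pow_succ]
    linarith
  · have hcoloop : M.flowPoly (insert e T) = 0 := flowPoly_insert_coloop heT hser.rank_insert_left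
    rwa [flowPoly_insert_nonloop hfT hser.rank_right, hcoloop, sub_zero,
      ← nullity_contract hfT hser.rank_right]
  · rw [nullity_contract heS he, nullity_insert heS hrank, pow_succ] at hcon
    rw [flowPoly_insert_nonloop heS he, derivative_sub, eval_sub, nullity_insert heS hrank,
      pow_succ]
    linarith

end FlowPoly

section MultivariateTutte

variable {K : Type*} [Field K] {q : K} {v : α → K}

/-- The multivariate Tutte polynomial of the restriction to `S` with edge weights `v`, normalised so
that the empty set contributes `1`. -/
def multivariateTutte (q : K) (M : RankFunction α) (S : Finset α) (v : α → K) : K :=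
  ∑ A ∈ S.powerset, q⁻¹ ^ M.rank A * ∏ x ∈ A, v x

lemma multivariateTutte_insert (heS : e ∉ S) :
    M.multivariateTutte q (insert e S) v =
      ∑ A ∈ S.powerset, (q⁻¹ ^ M.rank A + q⁻¹ ^ M.rank (insert e A) * v e) * ∏ x ∈ A, v x := by
  rw [multivariateTutte, Finset.sum_powerset_insert heS, ← Finset.sum_add_distrib]
  refine Finset.sum_congr rfl fun A hA => ?_
  rw [Finset.prod_insert fun h => heS (Finset.mem_powerset.mp hA h)]
  ring

lemma multivariateTutte_insert_update (heS : e ∉ S) (w : K) :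
    M.multivariateTutte q (insert e S) (Function.update v e w) =
      ∑ A ∈ S.powerset, (q⁻¹ ^ M.rank A + q⁻¹ ^ M.rank (insert e A) * w) * ∏ x ∈ A, v x := by
  rw [multivariateTutte_insert heS]
  refine Finset.sum_congr rfl fun A hA => ?_
  rw [Function.update_self,
    Finset.prod_update_of_notMem fun h => heS (Finset.mem_powerset.mp hA h)]

lemma multivariateTutte_insert_insert (heT : e ∉ T) (hfT : f ∉ insert e T) :
    M.multivariateTutte q (insert f (insert e T)) v =
      ∑ A ∈ T.powerset, (q⁻¹ ^ M.rank A + q⁻¹ ^ M.rank (insert e A) * v e +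
        q⁻¹ ^ M.rank (insert f A) * v f +
        q⁻¹ ^ M.rank (insert f (insert e A)) * v e * v f) * ∏ x ∈ A, v x := by
  rw [multivariateTutte_insert hfT, Finset.sum_powerset_insert heT, ← Finset.sum_add_distrib]
  refine Finset.sum_congr rfl fun A hA => ?_
  rw [Finset.prod_insert fun h => heT (Finset.mem_powerset.mp hA h)]
  ring

lemma multivariateTutte_insert_nonloop (heS : e ∉ S) (he : M.rank {e} = 1) :
    M.multivariateTutte q (insert e S) v = M.multivariateTutte q S v +
      q⁻¹ * v e * (M.contract e).multivariateTutte q S v := by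
  rw [multivariateTutte_insert heS, multivariateTutte, multivariateTutte, Finset.mul_sum,
    ← Finset.sum_add_distrib]
  refine Finset.sum_congr rfl fun A _ => ?_
  rw [← M.rank_contract_add e A, he, pow_succ]
  ring

lemma Parallel.multivariateTutte_insert_insert (h : M.Parallel e f) (heT : e ∉ T)
    (hfT : f ∉ insert e T) :
    M.multivariateTutte q (insert f (insert e T)) v =
      M.multivariateTutte q (insert e T)
        (Function.update v e ((1 + v e) * (1 + v f) - 1)) := by
  rw [RankFunction.multivariateTutte_insert_insert heT hfT, multivariateTutte_insert_update heT]
  refine Finset.sum_congr rfl fun A _ => ?_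
  have hf : M.rank (insert f A) = M.rank (insert e A) := by
    rw [← h.rank_insert_insert, Finset.insert_comm, h.symm.rank_insert_insert]
  rw [h.rank_insert_insert, hf]
  ring

lemma Series.multivariateTutte_insert_insert (h : M.Series T e f) (heT : e ∉ T)
    (hfT : f ∉ insert e T) (hq : q ≠ 0) (hv : q + v e + v f ≠ 0) :
    M.multivariateTutte q (insert f (insert e T)) v =
      q⁻¹ * (q + v e + v f) * (M.contract f).multivariateTutte q (insert e T)
        (Function.update v e (v e * v f / (q + v e + v f))) := by
  rw [RankFunction.multivariateTutte_insert_insert heT hfT, multivariateTutte_insert_update heT,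
    Finset.mul_sum]
  refine Finset.sum_congr rfl fun A hA => ?_
  obtain ⟨he, hf⟩ := h.rank_insert_of_subset (Finset.mem_powerset.mp hA)
  have hcA : (M.contract f).rank A = M.rank A := by
    have := M.rank_contract_add f A
    have := h.rank_right
    omega
  rw [hcA, he, hf, ← M.rank_contract_add f (insert e A), h.rank_right, pow_succ, pow_succ]
  field_simp

lemma eval_flowPoly_eq_multivariateTutte (M : RankFunction α) (S : Finset α) {q : ℝ} (hq : q ≠ 0) :
    (M.flowPoly S).eval q = (-1) ^ S.card * M.multivariateTutte q S fun _ => -q := by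
  rw [flowPoly, multivariateTutte, Polynomial.eval_finsetSum, Finset.mul_sum]
  refine Finset.sum_congr rfl fun A hA => ?_
  obtain ⟨k, hk⟩ := Nat.exists_eq_add_of_le (Finset.card_le_card (Finset.mem_powerset.mp hA))
  have hrank : q⁻¹ ^ M.rank A * q ^ M.rank A = 1 := by
    rw [← mul_pow, inv_mul_cancel₀ hq, one_pow]
  have hsign : (-1 : ℝ) ^ A.card * (-1) ^ A.card = 1 := by rw [← mul_pow]; simp
  have hpow : q ^ A.card = q ^ M.rank A * q ^ M.nullity A := by
    rw [← pow_add, rank_add_nullity]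
  simp only [Polynomial.eval_mul, Polynomial.eval_pow, Polynomial.eval_neg, Polynomial.eval_one,
    Polynomial.eval_X, Finset.prod_const]
  rw [hk, Nat.add_sub_cancel_left, neg_pow q, hpow, pow_add]
  linear_combination (-(-1 : ℝ) ^ k * q ^ M.nullity A) *
    (hsign + hrank * (-1 : ℝ) ^ A.card * (-1) ^ A.card)

end MultivariateTutte

section Weights

variable {a q x y : ℝ} (ha : a ∈ Set.Ico (-1 / 3 : ℝ) 0)
  (hx : x ∈ Set.Icc (a - 1) (a ^ 2 - 1)) (hy : y ∈ Set.Icc (a - 1) (a ^ 2 - 1))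

include ha hx hy

lemma one_add_mul_one_add_mem_Icc : (1 + x) * (1 + y) ∈ Set.Icc (a ^ 3) (a ^ 2) := by
  obtain ⟨⟨ha1, ha0⟩, ⟨hx1, hx2⟩, hy1, hy2⟩ := And.intro ha (And.intro hx hy)
  have haa : a ^ 2 ≤ -a := by nlinarith
  constructor
  · rcases le_total (1 + x + (1 + y)) (a + a ^ 2) with h | h
    · nlinarith [mul_nonneg (sub_nonneg.mpr hx1) (sub_nonneg.mpr hy1)]
    · nlinarith [mul_nonneg (sub_nonneg.mpr hx2) (sub_nonneg.mpr hy2),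
        mul_nonneg (sq_nonneg a) (sub_nonneg.mpr h)]
  · have hx' : |1 + x| ≤ -a := abs_le.mpr ⟨by linarith, by linarith⟩
    have hy' : |1 + y| ≤ -a := abs_le.mpr ⟨by linarith, by linarith⟩
    calc (1 + x) * (1 + y) ≤ |1 + x| * |1 + y| := (le_abs_self _).trans_eq (abs_mul _ _)
      _ ≤ -a * -a := mul_le_mul hx' hy' (abs_nonneg _) (by linarith)
      _ = a ^ 2 := by ring

lemma parallel_weight_mem_Icc : (1 + x) * (1 + y) - 1 ∈ Set.Icc (a - 1) (a ^ 2 - 1) := by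
  obtain ⟨h1, h2⟩ := one_add_mul_one_add_mem_Icc ha hx hy
  obtain ⟨ha1, ha0⟩ := ha
  have : a ≤ a ^ 3 := by nlinarith
  exact ⟨by linarith, by linarith⟩

variable (hq : q = (a - 1) ^ 2 * (a + 1))

include hq

lemma parallel_pair_pos : 0 < q + x + y + x * y := by
  have h := (one_add_mul_one_add_mem_Icc ha hx hy).1
  obtain ⟨ha1, ha0⟩ := ha
  have : 0 < q - 1 + a ^ 3 := by
    rw [hq]
    nlinarith [mul_pos (neg_pos.mpr ha0) (mul_pos (by linarith : 0 < 1 - a)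
      (by linarith : 0 < 1 + 2 * a))]
  linarith

lemma series_denom_neg : q + x + y < 0 := by
  obtain ⟨⟨ha1, ha0⟩, ⟨-, hx2⟩, -, hy2⟩ := And.intro ha (And.intro hx hy)
  have h1 : 0 < 1 - a := by linarith
  have h2 : 0 < 1 + a := by linarith
  have : 0 < (1 - a) * (1 + a) * (1 + a) := by positivity
  rw [hq]
  nlinarith

lemma series_weight_mem_Icc : x * y / (q + x + y) ∈ Set.Icc (a - 1) (a ^ 2 - 1) := by
  have hneg := series_denom_neg ha hx hy hq
  obtain ⟨⟨-, ha0⟩, ⟨-, hx2⟩, hy1, hy2⟩ := And.intro ha (And.intro hx hy)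
  rw [Set.mem_Icc, le_div_iff_of_neg hneg, div_le_iff_of_neg hneg]
  constructor
  · have h1 : (x - (a - 1)) * (y - (a - 1)) ≤ (a ^ 2 - a) * (a ^ 2 - a) :=
      mul_le_mul (by linarith) (by linarith) (by linarith) (by nlinarith)
    have h2 : (a - 1) ^ 2 + (a - 1) * q = (a ^ 2 - a) * (a ^ 2 - a) := by rw [hq]; ring
    nlinarith
  · have h1 : 0 ≤ (a ^ 2 - 1 - x) * (a ^ 2 - 1 - y) :=
      mul_nonneg (by linarith) (by linarith)
    have h2 : (a ^ 2 - 1) ^ 2 + (a ^ 2 - 1) * q = a * (1 - a ^ 2) ^ 2 := by rw [hq]; ring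
    have h3 : a * (1 - a ^ 2) ^ 2 ≤ 0 := mul_nonpos_of_nonpos_of_nonneg ha0.le (sq_nonneg _)
    nlinarith

end Weights

lemma exists_weight_parameter {q : ℝ} (h1 : 1 < q) (h2 : q ≤ 32 / 27) :
    ∃ a ∈ Set.Ico (-1 / 3 : ℝ) 0, q = (a - 1) ^ 2 * (a + 1) := by
  have hc : ContinuousOn (fun a : ℝ => (a - 1) ^ 2 * (a + 1)) (Set.Icc (-1 / 3) 0) := by fun_prop
  obtain ⟨a, ha, rfl⟩ := intermediate_value_Icc' (by norm_num) hc
    (show q ∈ _ by constructor <;> norm_num <;> linarith)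
  refine ⟨a, ⟨ha.1, ha.2.lt_of_ne ?_⟩, rfl⟩
  rintro rfl
  norm_num at h1

lemma neg_mem_Icc_of_weight_parameter {a q : ℝ} (ha : a ∈ Set.Ico (-1 / 3 : ℝ) 0)
    (hq : q = (a - 1) ^ 2 * (a + 1)) : -q ∈ Set.Icc (a - 1) (a ^ 2 - 1) := by
  obtain ⟨ha1, ha0⟩ := ha
  rw [hq]
  constructor <;> nlinarith [mul_pos (neg_pos.mpr ha0) (neg_pos.mpr ha0)]

lemma Parallel.multivariateTutte_pair_pos {a q : ℝ} {v : α → ℝ} (h : M.Parallel e f) (hef : e ≠ f)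
    (ha : a ∈ Set.Ico (-1 / 3 : ℝ) 0) (hq : q = (a - 1) ^ 2 * (a + 1)) (hq0 : 0 < q)
    (hv : ∀ x, v x ∈ Set.Icc (a - 1) (a ^ 2 - 1)) : 0 < M.multivariateTutte q {e, f} v := by
  have hZ : M.multivariateTutte q {e, f} v = q⁻¹ * (q + v e + v f + v e * v f) := by
    rw [Finset.pair_comm, ← insert_empty_eq e,
      RankFunction.multivariateTutte_insert_insert (Finset.notMem_empty e)
        (by simpa using hef.symm)]
    simp only [Finset.powerset_empty, Finset.sum_singleton, insert_empty_eq, h.rank_left,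
      h.rank_right, rank_empty, Finset.prod_empty, Finset.pair_comm f e, h.rank_pair]
    field_simp
  rw [hZ]
  exact mul_pos (inv_pos.mpr hq0) (parallel_pair_pos ha (hv e) (hv f) hq)

theorem Connected.multivariateTutte_sign {a q : ℝ} {v : α → ℝ} (hS : M.Connected S)
    (hcard : 1 < S.card) (ha : a ∈ Set.Ico (-1 / 3 : ℝ) 0) (hq : q = (a - 1) ^ 2 * (a + 1))
    (hv : ∀ x, v x ∈ Set.Icc (a - 1) (a ^ 2 - 1)) :
    0 < (-1) ^ (M.rank S + 1) * M.multivariateTutte q S v := by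
  have hq0 : 0 < q := by
    have : 0 < a + 1 := by linarith [ha.1]
    have : a - 1 ≠ 0 := by linarith [ha.2]
    rw [hq]
    positivity
  have hupdate {v : α → ℝ} {w : ℝ} (e : α) (hv : ∀ x, v x ∈ Set.Icc (a - 1) (a ^ 2 - 1))
      (hw : w ∈ Set.Icc (a - 1) (a ^ 2 - 1)) (x : α) :
      Function.update v e w x ∈ Set.Icc (a - 1) (a ^ 2 - 1) :=
    (Function.forall_update_iff v fun _ y => y ∈ Set.Icc (a - 1) (a ^ 2 - 1)).mpr
      ⟨hw, fun x _ => hv x⟩ x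
  refine hS.induction (P := fun M S => ∀ v : α → ℝ, (∀ x, v x ∈ Set.Icc (a - 1) (a ^ 2 - 1)) →
      0 < (-1) ^ (M.rank S + 1) * M.multivariateTutte q S v)
    (fun M e f hef hpar v hv => ?_) (fun M T e f heT hfT _ hpar ih v hv => ?_)
    (fun M T e f heT hfT hser ih v hv => ?_) (fun M S e heS _ he hrank hdel hcon v hv => ?_)
    hcard v hv
  · simpa [hpar.rank_pair] using hpar.multivariateTutte_pair_pos hef ha hq hq0 hv
  · rw [hpar.multivariateTutte_insert_insert heT hfT, hpar.rank_insert_insert]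
    exact ih _ (hupdate e hv (parallel_weight_mem_Icc ha (hv e) (hv f)))
  · have hdenom := series_denom_neg ha (hv e) (hv f) hq
    have hfactor := mul_neg_of_pos_of_neg (inv_pos.mpr hq0) hdenom
    have := ih _ (hupdate e hv (series_weight_mem_Icc ha (hv e) (hv f) hq))
    rw [hser.multivariateTutte_insert_insert heT hfT hq0.ne' hdenom.ne,
      ← M.rank_contract_add f (insert e T), hser.rank_right, pow_succ]
    nlinarith
  · have hrankc := M.rank_contract_add e S
    rw [hrank, he] at hrankc
    have hve : v e < 0 := by nlinarith [(hv e).2, ha.1, ha.2]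
    have hfactor := mul_neg_of_pos_of_neg (inv_pos.mpr hq0) hve
    have hdel := hdel v hv
    have hcon := hcon v hv
    rw [multivariateTutte_insert_nonloop heS he, hrank]
    rw [← hrankc, pow_succ] at hdel ⊢
    nlinarith

theorem Connected.flowPoly_sign_of_one_lt_card {q : ℝ} (hS : M.Connected S) (hcard : 1 < S.card)
    (h1 : 1 < q) (h2 : q ≤ 32 / 27) : 0 < (-1) ^ (M.nullity S + 1) * (M.flowPoly S).eval q := by
  obtain ⟨a, ha, hq⟩ := exists_weight_parameter h1 h2
  have h := hS.multivariateTutte_sign hcard ha hq fun _ => neg_mem_Icc_of_weight_parameter ha hq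
  have hsign : (-1 : ℝ) ^ (M.nullity S + 1) * (-1) ^ S.card = (-1) ^ (M.rank S + 1) := by
    rw [← pow_add, ← M.rank_add_nullity S,
      show M.nullity S + 1 + (M.rank S + M.nullity S) = M.rank S + 1 + 2 * M.nullity S by ring,
      pow_add, pow_mul, neg_one_sq, one_pow, mul_one]
  rwa [M.eval_flowPoly_eq_multivariateTutte S (by linarith), ← mul_assoc, hsign]

end RankFunction

/-! ### Connected components -/

namespace RankFunction

variable {α : Type*} [DecidableEq α] {M : RankFunction α} {A B C S : Finset α} {e : α}

namespace IsSeparator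

variable {X Y : Finset α}

lemma rank_union (h : M.IsSeparator S A) (hX : X ⊆ A) (hY : Y ⊆ S \ A) :
    M.rank (X ∪ Y) = M.rank X + M.rank Y := by
  have h1 := M.rank_union_add_rank_le hX (S \ A)
  have h2 := M.rank_union_add_rank_le hY X
  rw [Finset.union_sdiff_of_subset h.1] at h1
  rw [Finset.union_comm _ X, Finset.union_comm Y X] at h2
  have := M.rank_union_le X Y
  have := h.2
  omega

lemma rank_add_rank_sdiff (h : M.IsSeparator S A) : M.rank A + M.rank (S \ A) = M.rank S := by
  rw [← h.rank_union subset_rfl subset_rfl, Finset.union_sdiff_of_subset h.1]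

lemma nullity_union (h : M.IsSeparator S A) (hX : X ⊆ A) (hY : Y ⊆ S \ A) :
    M.nullity (X ∪ Y) = M.nullity X + M.nullity Y := by
  have hdisj : Disjoint X Y := Finset.disjoint_sdiff.mono hX hY
  have := M.rank_add_nullity (X ∪ Y)
  rw [h.rank_union hX hY, Finset.card_union_of_disjoint hdisj] at this
  have := M.rank_add_nullity X
  have := M.rank_add_nullity Y
  omega

lemma inter (h : M.IsSeparator S A) (hB : B ⊆ S) : M.IsSeparator B (B ∩ A) := by
  refine ⟨Finset.inter_subset_left, ?_⟩
  rw [Finset.sdiff_inter_self_left, ← h.rank_union Finset.inter_subset_right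
    (Finset.sdiff_subset_sdiff hB subset_rfl), Finset.union_comm, Finset.sdiff_union_inter]

lemma trans (h : M.IsSeparator S A) (hC : M.IsSeparator A C) : M.IsSeparator S C := by
  refine ⟨hC.1.trans h.1, ?_⟩
  have hdiff : S \ C = A \ C ∪ S \ A := by have := h.1; have := hC.1; grind
  have := hC.rank_add_rank_sdiff
  have := h.rank_add_rank_sdiff
  rw [hdiff, h.rank_union Finset.sdiff_subset subset_rfl]
  omega

lemma rank_insert_inter (h : M.IsSeparator S A) (he : e ∈ A) (hY : Y ⊆ S)
    (heY : M.rank (insert e Y) = M.rank Y) : M.rank (insert e (Y ∩ A)) = M.rank (Y ∩ A) := by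
  have hout : Y \ A ⊆ S \ A := Finset.sdiff_subset_sdiff hY subset_rfl
  have h1 := h.rank_union Finset.inter_subset_right hout (X := Y ∩ A)
  have h2 := h.rank_union (Finset.insert_subset he Finset.inter_subset_right) hout
    (X := insert e (Y ∩ A))
  rw [Finset.insert_union] at h2
  rw [Finset.union_comm, Finset.sdiff_union_inter] at h1 h2
  omega

lemma coloopless (h : M.IsSeparator S A) (hS : M.Coloopless S) : M.Coloopless A := by
  intro e he
  have herase : S.erase e = A.erase e ∪ S \ A := by have := h.1; grind
  have hrank := hS e (h.1 he)
  rw [herase, h.rank_union (Finset.erase_subset e A) subset_rfl] at hrank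
  have := h.rank_add_rank_sdiff
  omega

end IsSeparator

lemma Connected.subset_or_disjoint (hB : M.Connected B) (h : M.IsSeparator S A) (hBS : B ⊆ S) :
    B ⊆ A ∨ Disjoint B A :=
  (hB _ (h.inter hBS)).symm.imp Finset.inter_eq_left.mp Finset.disjoint_iff_inter_eq_empty.mpr

theorem separator_induction {P : Finset α → Prop} (M : RankFunction α) (empty : P ∅)
    (connected : ∀ S, S.Nonempty → M.Connected S → P S)
    (separator : ∀ S A, M.IsSeparator S A → P A → P (S \ A) → P S) (S : Finset α) : P S := by
  induction S using Finset.strongInduction with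
  | H S ih =>
    rcases S.eq_empty_or_nonempty with rfl | hne
    · exact empty
    by_cases hS : M.Connected S
    · exact connected S hne hS
    · obtain ⟨A, hA, hA0, hAS⟩ : ∃ A, M.IsSeparator S A ∧ A ≠ ∅ ∧ A ≠ S := by
        simpa only [Connected, not_forall, exists_prop, not_or] using hS
      exact separator S A hA (ih A (hA.1.ssubset_of_ne hAS))
        (ih _ (Finset.sdiff_ssubset hA.1 (Finset.nonempty_iff_ne_empty.mpr hA0)))

/-- The connected components of the restriction to `S`; for a graph these are the edge sets of its
blocks. -/
structure IsComponent (M : RankFunction α) (S C : Finset α) : Prop where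
  nonempty : C.Nonempty
  isSeparator : M.IsSeparator S C
  connected : M.Connected C

open Classical in
/-- The finite set of connected components of the restriction to `S`. -/
noncomputable def components (M : RankFunction α) (S : Finset α) : Finset (Finset α) :=
  S.powerset.filter (M.IsComponent S)

lemma mem_components : C ∈ M.components S ↔ M.IsComponent S C := by
  simpa [components] using fun h : M.IsComponent S C => h.isSeparator.1

@[simp]
lemma components_empty (M : RankFunction α) : M.components ∅ = ∅ := by
  ext C
  simpa [mem_components] using
    fun h : M.IsComponent ∅ C => h.nonempty.ne_empty (Finset.subset_empty.mp h.isSeparator.1)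

lemma Connected.components_eq (hS : M.Connected S) (hne : S.Nonempty) : M.components S = {S} := by
  ext C
  rw [mem_components, Finset.mem_singleton]
  constructor
  · exact fun h => (hS C h.isSeparator).resolve_left h.nonempty.ne_empty
  · rintro rfl
    exact ⟨hne, ⟨subset_rfl, by simp⟩, hS⟩

lemma IsSeparator.components_eq_union (h : M.IsSeparator S A) :
    M.components S = M.components A ∪ M.components (S \ A) := by
  ext C
  simp only [Finset.mem_union, mem_components]
  constructor
  · intro hC
    have hrestrict {B : Finset α} (hB : B ⊆ S) (hCB : C ⊆ B) : M.IsComponent B C :=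
      ⟨hC.nonempty, Finset.inter_eq_right.mpr hCB ▸ hC.isSeparator.inter hB, hC.connected⟩
    rcases hC.connected.subset_or_disjoint h hC.isSeparator.1 with hCA | hCA
    · exact .inl (hrestrict h.1 hCA)
    · exact .inr (hrestrict Finset.sdiff_subset
        (Finset.subset_sdiff.mpr ⟨hC.isSeparator.1, hCA⟩))
  · rintro (hC | hC)
    · exact ⟨hC.nonempty, h.trans hC.isSeparator, hC.connected⟩
    · exact ⟨hC.nonempty, h.compl.trans hC.isSeparator, hC.connected⟩

lemma IsSeparator.card_components (h : M.IsSeparator S A) :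
    (M.components S).card = (M.components A).card + (M.components (S \ A)).card := by
  rw [h.components_eq_union, Finset.card_union_of_disjoint]
  refine Finset.disjoint_left.mpr fun C hC hC' => ?_
  rw [mem_components] at hC hC'
  obtain ⟨x, hx⟩ := hC.nonempty
  exact (Finset.mem_sdiff.mp (hC'.isSeparator.1 hx)).2 (hC.isSeparator.1 hx)

lemma exists_mem_components (M : RankFunction α) (he : e ∈ S) : ∃ C ∈ M.components S, e ∈ C := by
  induction S using M.separator_induction with
  | empty => simp at he
  | connected S hne hS => exact ⟨S, by simp [hS.components_eq hne], he⟩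
  | separator S A hA ihA ihS =>
    simp only [hA.components_eq_union, Finset.mem_union, or_and_right, exists_or]
    by_cases heA : e ∈ A
    · exact .inl (ihA heA)
    · exact .inr (ihS (Finset.mem_sdiff.mpr ⟨he, heA⟩))

open Polynomial

lemma sum_powerset_union {β : Type*} [AddCommMonoid β] (hAB : Disjoint A B) (g : Finset α → β) :
    ∑ Z ∈ (A ∪ B).powerset, g Z = ∑ X ∈ A.powerset, ∑ Y ∈ B.powerset, g (X ∪ Y) := by
  induction B using Finset.induction_on generalizing g with
  | empty => simp
  | insert b B hb ih =>
    rw [Finset.disjoint_insert_right] at hAB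
    have hbAB : b ∉ A ∪ B := by simp [hb, hAB.1]
    simp_rw [Finset.union_insert, Finset.sum_powerset_insert hbAB, ih hAB.2,
      Finset.sum_powerset_insert hb, Finset.sum_add_distrib, Finset.union_insert]

lemma IsSeparator.flowPoly_eq_mul (h : M.IsSeparator S A) :
    M.flowPoly S = M.flowPoly A * M.flowPoly (S \ A) := by
  have hunion : M.flowPoly S = M.flowPoly (A ∪ S \ A) := by
    rw [Finset.union_sdiff_of_subset h.1]
  rw [hunion, flowPoly, sum_powerset_union Finset.disjoint_sdiff, flowPoly, flowPoly,
    Finset.sum_mul_sum]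
  refine Finset.sum_congr rfl fun X hX => Finset.sum_congr rfl fun Y hY => ?_
  rw [Finset.mem_powerset] at hX hY
  have := Finset.card_le_card hX
  have := Finset.card_le_card hY
  rw [h.nullity_union hX hY, Finset.card_union_of_disjoint Finset.disjoint_sdiff,
    Finset.card_union_of_disjoint (Finset.disjoint_sdiff.mono hX hY),
    show A.card + (S \ A).card - (X.card + Y.card) =
      (A.card - X.card) + ((S \ A).card - Y.card) by omega]
  ring

lemma Coloopless.flowPoly_ne_zero (hS : M.Coloopless S) : M.flowPoly S ≠ 0 := by
  intro h
  simpa [h] using hS.flowPoly_sign_of_lt_one zero_lt_one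

lemma flowPoly_singleton_loop (he : M.rank {e} = 0) : M.flowPoly {e} = X - 1 := by
  simpa using flowPoly_insert_loop (Finset.notMem_empty e) he

lemma Coloopless.rank_singleton (he : M.Coloopless {e}) : M.rank {e} = 0 := by
  simpa using (he e (Finset.mem_singleton_self e)).symm

lemma Connected.rootMultiplicity_flowPoly (hS : M.Connected S) (hne : S.Nonempty)
    (hcl : M.Coloopless S) : (M.flowPoly S).rootMultiplicity 1 = 1 := by
  rcases Nat.lt_or_ge 1 S.card with hcard | hcard
  · have hroot : 0 < (M.flowPoly S).rootMultiplicity 1 :=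
      (rootMultiplicity_pos hcl.flowPoly_ne_zero).mpr (M.eval_one_flowPoly hne)
    have hsimple : ¬ 1 < (M.flowPoly S).rootMultiplicity 1 := by
      rw [one_lt_rootMultiplicity_iff_isRoot hcl.flowPoly_ne_zero]
      rintro ⟨-, hderiv⟩
      simpa [hderiv.eq_zero] using hS.derivative_flowPoly_sign hcard
    omega
  · obtain ⟨e, rfl⟩ := Finset.card_eq_one.mp (le_antisymm hcard hne.card_pos)
    rw [flowPoly_singleton_loop hcl.rank_singleton]
    simpa using rootMultiplicity_X_sub_C_self (x := (1 : ℝ))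

lemma Connected.flowPoly_sign_of_one_lt (hS : M.Connected S) (hne : S.Nonempty)
    (hcl : M.Coloopless S) {q : ℝ} (h1 : 1 < q) (h2 : q ≤ 32 / 27) :
    0 < (-1) ^ (M.nullity S + 1) * (M.flowPoly S).eval q := by
  rcases Nat.lt_or_ge 1 S.card with hcard | hcard
  · exact hS.flowPoly_sign_of_one_lt_card hcard h1 h2
  · obtain ⟨e, rfl⟩ := Finset.card_eq_one.mp (le_antisymm hcard hne.card_pos)
    simp [flowPoly_singleton_loop, nullity, hcl.rank_singleton, h1]

theorem Coloopless.rootMultiplicity_flowPoly (hS : M.Coloopless S) :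
    (M.flowPoly S).rootMultiplicity 1 = (M.components S).card := by
  induction S using M.separator_induction with
  | empty => simp
  | connected S hne hconn =>
    rw [hconn.rootMultiplicity_flowPoly hne hS, hconn.components_eq hne, Finset.card_singleton]
  | separator S A hA ihA ihS =>
    have hne := hS.flowPoly_ne_zero
    rw [hA.flowPoly_eq_mul] at hne ⊢
    rw [rootMultiplicity_mul hne, ihA (hA.coloopless hS), ihS (hA.compl.coloopless hS),
      hA.card_components]

theorem Coloopless.flowPoly_sign_of_one_lt (hS : M.Coloopless S) {q : ℝ} (h1 : 1 < q)
    (h2 : q ≤ 32 / 27) :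
    0 < (-1) ^ (M.nullity S + (M.components S).card) * (M.flowPoly S).eval q := by
  induction S using M.separator_induction with
  | empty => simp
  | connected S hne hconn =>
    simpa [hconn.components_eq hne] using hconn.flowPoly_sign_of_one_lt hne hS h1 h2
  | separator S A hA ihA ihS =>
    have hnull : M.nullity S = M.nullity A + M.nullity (S \ A) := by
      rw [← hA.nullity_union subset_rfl subset_rfl, Finset.union_sdiff_of_subset hA.1]
    rw [hA.flowPoly_eq_mul, hnull, hA.card_components, eval_mul, add_add_add_comm, pow_add,
      mul_mul_mul_comm]
    exact mul_pos (ihA (hA.coloopless hS)) (ihS (hA.compl.coloopless hS))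

end RankFunction

/-! ### Blocks of a graph -/

namespace Multigraph

variable {V E W K : Type} {G : Multigraph V E} {F F' : Set E} {e : E} {u v w : V}

section Reach

lemma reachSetoid_le_iff {s : Setoid V} :
    G.reachSetoid F ≤ s ↔ ∀ e ∈ F, s (G.fst e) (G.snd e) := by
  constructor
  · exact fun h e he => h (.rel _ _ ⟨e, he, .inl ⟨rfl, rfl⟩⟩)
  · refine fun h => Setoid.eqvGen_le ?_
    rintro _ _ ⟨e, he, ⟨rfl, rfl⟩ | ⟨rfl, rfl⟩⟩
    exacts [h e he, s.symm (h e he)]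

lemma reach_of_mem (he : e ∈ F) : G.Reach F (G.fst e) (G.snd e) :=
  reachSetoid_le_iff.mp le_rfl e he

lemma reach_iff_of_mk_eq (h : s(G.fst e, G.snd e) = s(u, v)) :
    G.Reach F (G.fst e) (G.snd e) ↔ G.Reach F u v := by
  rcases Sym2.eq_iff.mp h with ⟨rfl, rfl⟩ | ⟨rfl, rfl⟩
  exacts [.rfl, ⟨.symm _ _, .symm _ _⟩]

lemma reach_of_mk_eq (h : s(G.fst e, G.snd e) = s(u, v)) (he : e ∈ F) : G.Reach F u v :=
  (reach_iff_of_mk_eq h).mp (reach_of_mem he)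

lemma reachSetoid_mono (h : F ⊆ F') : G.reachSetoid F ≤ G.reachSetoid F' :=
  reachSetoid_le_iff.mpr fun _ he => reach_of_mem (h he)

lemma Reach.mono (huv : G.Reach F u v) (h : F ⊆ F') : G.Reach F' u v :=
  reachSetoid_mono h huv

lemma Reach.eq_of_forall {β : Type*} (huv : G.Reach F u v) (p : V → β)
    (hp : ∀ e ∈ F, p (G.fst e) = p (G.snd e)) : p u = p v :=
  (reachSetoid_le_iff (s := Setoid.ker p)).mpr hp huv

lemma reach_image_iff {H : Multigraph W K} {f : W → V} {g : K → E} (hf : f.Injective)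
    (hfst : ∀ k, G.fst (g k) = f (H.fst k)) (hsnd : ∀ k, G.snd (g k) = f (H.snd k))
    {D : Set K} {a b : W} : G.Reach (g '' D) (f a) (f b) ↔ H.Reach D a b := by
  constructor
  · intro h
    have hiff (c : W) : (∃ d, f d = f c ∧ H.Reach D a d) ↔ H.Reach D a c :=
      ⟨by rintro ⟨d, hd, had⟩; exact hf hd ▸ had, fun hac => ⟨c, rfl, hac⟩⟩
    have hab := h.eq_of_forall (fun x => ∃ d, f d = x ∧ H.Reach D a d) <| by
      rintro _ ⟨k, hk, rfl⟩
      simp only [hfst, hsnd, hiff, eq_iff_iff]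
      exact ⟨fun hk' => hk'.trans _ _ _ (reach_of_mem hk),
        fun hk' => hk'.trans _ _ _ (reach_of_mem hk).symm⟩
    simp only [hiff, eq_iff_iff] at hab
    exact hab.mp (.refl a)
  · refine fun h => (reachSetoid_le_iff (s := (G.reachSetoid (g '' D)).comap f)).mpr ?_ h
    intro k hk
    rw [Setoid.comap_rel, ← hfst, ← hsnd]
    exact reach_of_mem (Set.mem_image_of_mem g hk)

end Reach

section Components

lemma connected_iff : G.Connected ↔ Nonempty V ∧ ∀ u v, G.Reach Set.univ u v := by
  rw [Connected, numComponents, ncomp, Nat.card_eq_one_iff_unique, nonempty_quotient_iff, and_comm]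
  refine and_congr_right fun _ => ⟨fun h u v => Quotient.exact (h.elim _ _), fun h => ⟨?_⟩⟩
  rintro ⟨u⟩ ⟨v⟩
  exact Quotient.sound (h u v)

lemma numComponents_le_one_iff [Finite V] :
    G.numComponents ≤ 1 ↔ ∀ u v, G.Reach Set.univ u v := by
  rw [numComponents, ncomp, Finite.card_le_one_iff_subsingleton]
  refine ⟨fun h u v => Quotient.exact (h.elim _ _), fun h => ⟨?_⟩⟩
  rintro ⟨u⟩ ⟨v⟩
  exact Quotient.sound (h u v)

variable (G)

lemma ncomp_le [Finite V] (F : Set E) : G.ncomp F ≤ Nat.card V :=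
  Nat.card_le_card_of_surjective _ Quotient.mk_surjective

lemma ncomp_empty : G.ncomp ∅ = Nat.card V := by
  have h : G.reachSetoid ∅ = ⊥ := le_bot_iff.mp (reachSetoid_le_iff.mpr (by simp))
  rw [ncomp, h]
  exact Nat.card_congr Setoid.quotientBotEquiv

variable {G}

lemma ncomp_insert_of_reach (h : G.Reach F (G.fst e) (G.snd e)) :
    G.ncomp (insert e F) = G.ncomp F := by
  have : G.reachSetoid (insert e F) = G.reachSetoid F := by
    refine le_antisymm (reachSetoid_le_iff.mpr ?_) (reachSetoid_mono (Set.subset_insert e F))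
    rintro f (rfl | hf)
    exacts [h, reach_of_mem hf]
  rw [ncomp, this, ncomp]

lemma ncomp_insert_of_not_reach [Finite V] (h : ¬ G.Reach F (G.fst e) (G.snd e)) :
    G.ncomp (insert e F) + 1 = G.ncomp F := by
  classical
  set a : Quotient (G.reachSetoid F) := ⟦G.fst e⟧
  set b : Quotient (G.reachSetoid F) := ⟦G.snd e⟧
  have hab : b ≠ a := fun hba => h (Quotient.exact hba.symm)
  let collapse : V → Quotient (G.reachSetoid F) := Function.update id a b ∘ Quotient.mk _
  have hker : G.reachSetoid (insert e F) = Setoid.ker collapse := by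
    refine le_antisymm (reachSetoid_le_iff.mpr ?_) fun u v huv => ?_
    · rintro f (rfl | hf)
      · simp [collapse, Setoid.ker_def, a, b, hab]
      · exact congrArg (Function.update id a b) (Quotient.sound (reach_of_mem hf))
    · let θ : Quotient (G.reachSetoid F) → Quotient (G.reachSetoid (insert e F)) :=
        Quotient.map id (reachSetoid_mono (Set.subset_insert e F))
      have hθ (c) : θ (Function.update id a b c) = θ c := by
        rcases eq_or_ne c a with rfl | hc
        · rw [Function.update_self]
          exact Quotient.sound (reach_of_mem (Set.mem_insert e F)).symm
        · rw [Function.update_of_ne hc, id]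
      exact Quotient.exact ((hθ ⟦u⟧).symm.trans ((congrArg θ huv).trans (hθ ⟦v⟧)))
  have hrange : Set.range collapse = {a}ᶜ := by
    ext c
    rw [Set.range_comp, Quotient.mk_surjective.range_eq, Set.image_univ]
    constructor
    · rintro ⟨d, rfl⟩
      rcases eq_or_ne d a with rfl | hd
      · simp [hab]
      · simp [hd]
    · exact fun hc => ⟨c, Function.update_of_ne hc _ _⟩
  rw [ncomp, hker, Nat.card_congr (Setoid.quotientKerEquivRange collapse), hrange,
    Nat.card_coe_set_eq, add_comm, ← Set.ncard_singleton a, Set.ncard_add_ncard_compl, ncomp]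

lemma ncomp_insert_eq_iff [Finite V] :
    G.ncomp (insert e F) = G.ncomp F ↔ G.Reach F (G.fst e) (G.snd e) := by
  refine ⟨fun h => ?_, ncomp_insert_of_reach⟩
  by_contra hreach
  have := ncomp_insert_of_not_reach hreach
  omega

end Components

section CycleRank

variable [DecidableEq E] [Finite V]

/-- The rank function of the cycle matroid of `G`. -/
noncomputable def cycleRank (G : Multigraph V E) : RankFunction E :=
  have ncomp_insert_cases (e : E) (A : Finset E) : G.ncomp ↑(insert e A) = G.ncomp A ∨
      G.ncomp ↑(insert e A) + 1 = G.ncomp A := by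
    rw [Finset.coe_insert]
    exact (em _).imp ncomp_insert_of_reach ncomp_insert_of_not_reach
  .ofInsert (fun A => Nat.card V - G.ncomp A) (by simp [ncomp_empty])
    (fun e A => by have := ncomp_insert_cases e A; omega)
    (fun e A => by have := ncomp_insert_cases e A; omega)
    (fun e A B hAB h => by
      have hA := G.ncomp_le A
      have hA' := G.ncomp_le ↑(insert e A)
      have hncomp : G.ncomp ↑(insert e A) = G.ncomp A := by omega
      rw [Finset.coe_insert, ncomp_insert_eq_iff] at hncomp
      rw [Finset.coe_insert, ncomp_insert_of_reach (hncomp.mono (Finset.coe_subset.mpr hAB))])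

lemma cycleRank_add_ncomp (G : Multigraph V E) (A : Finset E) :
    G.cycleRank.rank A + G.ncomp A = Nat.card V :=
  Nat.sub_add_cancel (G.ncomp_le A)

lemma cycleRank_insert_eq_iff {A : Finset E} :
    G.cycleRank.rank (insert e A) = G.cycleRank.rank A ↔ G.Reach A (G.fst e) (G.snd e) := by
  have h := G.cycleRank_add_ncomp A
  have h' := G.cycleRank_add_ncomp (insert e A)
  rw [← ncomp_insert_eq_iff, ← Finset.coe_insert]
  omega

end CycleRank

section Support

/-- The set of endpoints of the edges in `F`. -/
def support (G : Multigraph V E) (F : Set E) : Set V :=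
  G.fst '' F ∪ G.snd '' F

lemma fst_mem_support (he : e ∈ F) : G.fst e ∈ G.support F :=
  .inl (Set.mem_image_of_mem _ he)

lemma snd_mem_support (he : e ∈ F) : G.snd e ∈ G.support F :=
  .inr (Set.mem_image_of_mem _ he)

lemma mem_support_iff : v ∈ G.support F ↔ ∃ e ∈ F, v ∈ s(G.fst e, G.snd e) := by
  simp only [support, Set.mem_union, Set.mem_image, Sym2.mem_iff, ← exists_or, ← and_or_left,
    eq_comm]

lemma exists_mem_support_inter {A B : Set E} (hA : A.Nonempty) (hB : B.Nonempty)
    (h : ∀ u ∈ G.support (A ∪ B), ∀ w ∈ G.support (A ∪ B), G.Reach (A ∪ B) u w) :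
    (G.support A ∩ G.support B).Nonempty := by
  obtain ⟨a, ha⟩ := hA
  obtain ⟨b, hb⟩ := hB
  by_contra hempty
  have hdisj {v : V} (hvA : v ∈ G.support A) : v ∉ G.support B := fun hvB => hempty ⟨v, hvA, hvB⟩
  have := (h _ (fst_mem_support (.inl ha)) _ (fst_mem_support (.inr hb))).eq_of_forall
    (· ∈ G.support A) <| by
      rintro e (he | he)
      · exact propext (iff_of_true (fst_mem_support he) (snd_mem_support he))
      · exact propext (iff_of_false (fun h => hdisj h (fst_mem_support he))
          fun h => hdisj h (snd_mem_support he))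
  exact hdisj (this.mp (fst_mem_support ha)) (fst_mem_support hb)

lemma Reach.eq_of_notMem_support (h : G.Reach F u w) (hu : u ∉ G.support F) : u = w := by
  have := h.eq_of_forall (· = u) fun e he => propext <| iff_of_false
    (fun heu => hu (heu ▸ fst_mem_support he)) fun heu => hu (heu ▸ snd_mem_support he)
  exact (this.mp rfl).symm

lemma support_mono (h : F ⊆ F') : G.support F ⊆ G.support F' :=
  Set.union_subset_union (Set.image_mono h) (Set.image_mono h)

/-- The edges of `F` that have no endpoint in `X`. -/
def avoiding (G : Multigraph V E) (F : Set E) (X : Set V) : Set E :=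
  {e ∈ F | G.fst e ∉ X ∧ G.snd e ∉ X}

-- Retracting the support of `F` to `x` turns a walk in `F ∪ F'` into one in `F'`.
lemma Reach.of_union (h : G.Reach (F ∪ F') u w) {S : Set V} {x : V} (hS : G.support F' ⊆ S)
    (hx : G.support F ∩ S ⊆ {x}) (hu : u ∈ S) (hw : w ∈ S) : G.Reach F' u w := by
  classical
  let retract (v : V) : V := if v ∈ S then v else x
  have hmem {v : V} (hv : v ∈ S) : retract v = v := if_pos hv
  have hF {v : V} (hv : v ∈ G.support F) : retract v = x := by
    by_cases hvS : v ∈ S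
    · exact (hmem hvS).trans (hx ⟨hv, hvS⟩)
    · exact if_neg hvS
  have hle : G.reachSetoid (F ∪ F') ≤ (G.reachSetoid F').comap retract := by
    refine reachSetoid_le_iff.mpr ?_
    rintro e (he | he)
    · simp [Setoid.comap_rel, hF (fst_mem_support he), hF (snd_mem_support he)]
    · rw [Setoid.comap_rel, hmem (hS (fst_mem_support he)), hmem (hS (snd_mem_support he))]
      exact reach_of_mem he
  have := hle h
  rwa [Setoid.comap_rel, hmem hu, hmem hw] at this

variable [DecidableEq E] [Finite V]

lemma cycleRank_union_of_support {A B : Finset E} {x : V}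
    (hx : G.support A ∩ G.support B ⊆ {x}) :
    G.cycleRank.rank (A ∪ B) = G.cycleRank.rank A + G.cycleRank.rank B := by
  induction B using Finset.induction_on with
  | empty => simp
  | insert e B _ ih =>
    have hsupp := G.support_mono (Finset.coe_subset.mpr (Finset.subset_insert e B))
    have he : e ∈ (↑(insert e B) : Set E) := by simp
    have hreach : G.Reach ↑(A ∪ B) (G.fst e) (G.snd e) ↔ G.Reach B (G.fst e) (G.snd e) := by
      rw [Finset.coe_union]
      exact ⟨fun h => h.of_union hsupp hx (fst_mem_support he) (snd_mem_support he),
        fun h => h.mono Set.subset_union_right⟩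
    rw [← cycleRank_insert_eq_iff, ← cycleRank_insert_eq_iff] at hreach
    rw [Finset.union_insert]
    have := ih ((Set.inter_subset_inter_right _ hsupp).trans hx)
    have := G.cycleRank.rank_le_rank_insert e (A ∪ B)
    have := G.cycleRank.rank_insert_le e (A ∪ B)
    have := G.cycleRank.rank_le_rank_insert e B
    have := G.cycleRank.rank_insert_le e B
    omega

lemma isSeparator_cycleRank {A C : Finset E} {x : V} (hAC : A ⊆ C)
    (hx : G.support A ∩ G.support ↑(C \ A) ⊆ {x}) : G.cycleRank.IsSeparator C A :=
  ⟨hAC, by rw [← cycleRank_union_of_support hx, Finset.union_sdiff_of_subset hAC]⟩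

end Support

section Blocks

namespace Subgraph

variable (H : G.Subgraph)

lemma reach_toMultigraph_iff {a b : H.verts} :
    H.toMultigraph.Reach Set.univ a b ↔ G.Reach H.edges a b := by
  rw [← reach_image_iff (G := G) (f := Subtype.val) (g := Subtype.val) Subtype.val_injective
    (fun _ => rfl) (fun _ => rfl), Set.image_univ, Subtype.range_coe]

lemma reach_deleteVerts_iff {x : H.verts} {a b : {v : H.verts // v ∉ ({x} : Set H.verts)}} :
    (H.toMultigraph.deleteVerts {x}).Reach Set.univ a b ↔
      G.Reach (G.avoiding H.edges {x.1}) a.1 b.1 := by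
  rw [← reach_image_iff (G := G) (f := fun v => v.1.1) (g := fun e => e.1.1)
    (Subtype.val_injective.comp Subtype.val_injective) (fun _ => rfl) (fun _ => rfl),
    Set.image_univ]
  have hrange : Set.range (fun e : {e : H.edges // H.toMultigraph.fst e ∉ ({x} : Set H.verts) ∧
      H.toMultigraph.snd e ∉ ({x} : Set H.verts)} => e.1.1) = G.avoiding H.edges {x.1} := by
    ext e
    constructor
    · rintro ⟨e, rfl⟩
      exact ⟨e.1.2, fun h => e.2.1 (Subtype.ext h), fun h => e.2.2 (Subtype.ext h)⟩
    · rintro ⟨he, hfst, hsnd⟩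
      exact ⟨⟨⟨e, he⟩, fun h => hfst (congrArg Subtype.val h),
        fun h => hsnd (congrArg Subtype.val h)⟩, rfl⟩
  rw [hrange]

lemma nonSeparable_iff [Finite V] : H.toMultigraph.NonSeparable ↔
    (H.verts.ncard ≤ 1 ∧ H.edges.ncard ≤ 1) ∨
      (H.verts.Nonempty ∧ ∀ u ∈ H.verts, ∀ w ∈ H.verts, G.Reach H.edges u w) ∧
      (∀ e ∈ H.edges, G.fst e ≠ G.snd e) ∧
      ∀ x ∈ H.verts, ∀ u ∈ H.verts \ {x}, ∀ w ∈ H.verts \ {x},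
        G.Reach (G.avoiding H.edges {x}) u w := by
  have hconn : H.toMultigraph.Connected ↔
      H.verts.Nonempty ∧ ∀ u ∈ H.verts, ∀ w ∈ H.verts, G.Reach H.edges u w := by
    rw [connected_iff, Set.nonempty_coe_sort]
    simp only [reach_toMultigraph_iff, Subtype.forall]
  have hloop : H.toMultigraph.Loopless ↔ ∀ e ∈ H.edges, G.fst e ≠ G.snd e := by
    simp [Loopless, toMultigraph, Subtype.ext_iff]
  rw [NonSeparable, Nat.card_coe_set_eq, Nat.card_coe_set_eq, ← hconn, ← hloop]
  refine or_congr_right (and_congr_right fun h => and_congr_right fun _ => ?_)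
  rw [Connected] at h
  simp only [IsCutVertex, h, not_lt, numComponents_le_one_iff, reach_deleteVerts_iff,
    Subtype.forall, Set.mem_singleton_iff, Subtype.ext_iff, Set.mem_sdiff, and_imp]

variable {H}

lemma verts_eq_support [Finite V] (hH : H.toMultigraph.NonSeparable) (hne : H.edges.Nonempty) :
    H.verts = G.support H.edges := by
  obtain ⟨e, he⟩ := hne
  refine Set.Subset.antisymm (fun v hv => ?_) ?_
  · rcases H.nonSeparable_iff.mp hH with ⟨hcard, -⟩ | ⟨⟨-, hreach⟩, -, -⟩
    · rw [(Set.ncard_le_one_iff).mp hcard hv (H.fst_mem he)]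
      exact fst_mem_support he
    · have := (hreach v hv _ (H.fst_mem he)).eq_of_forall (· ∈ G.support H.edges)
        fun f hf => propext (iff_of_true (fst_mem_support hf) (snd_mem_support hf))
      exact this.mpr (fst_mem_support he)
  · rintro _ (⟨f, hf, rfl⟩ | ⟨f, hf, rfl⟩)
    exacts [H.fst_mem hf, H.snd_mem hf]

end Subgraph

/-- The subgraph formed by the edges in `F` and their endpoints. -/
def edgeSubgraph (G : Multigraph V E) (F : Set E) : G.Subgraph where
  verts := G.support F
  edges := F
  fst_mem _ he := fst_mem_support he
  snd_mem _ he := snd_mem_support he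

lemma Subgraph.eq_edgeSubgraph [Finite V] {H : G.Subgraph} (hH : H.toMultigraph.NonSeparable)
    (hHF : H.edges = F) (hF : F.Nonempty) : H = G.edgeSubgraph F := by
  subst hHF
  have hverts := Subgraph.verts_eq_support hH hF
  obtain ⟨verts, edges⟩ := H
  obtain rfl : verts = G.support edges := hverts
  rfl

variable [DecidableEq E] [Finite V] {C : Finset E}

lemma reach_avoiding_of_connected (hC : G.cycleRank.Connected C) {X : Set V} {x : V}
    (hX : X ⊆ {x})
    (hu : u ∈ G.support C \ X) (hw : w ∈ G.support C \ X) : G.Reach (G.avoiding C X) u w := by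
  classical
  let A := C.filter fun e => ∃ v ∉ X, v ∈ s(G.fst e, G.snd e) ∧ G.Reach (G.avoiding C X) u v
  have hA {e : E} {v : V} (he : e ∈ C) (hv : v ∈ s(G.fst e, G.snd e)) (hvX : v ∉ X) :
      e ∈ A ↔ G.Reach (G.avoiding C X) u v := by
    refine ⟨fun heA => ?_, fun huv => Finset.mem_filter.mpr ⟨he, v, hvX, hv, huv⟩⟩
    obtain ⟨-, v', hv'X, hv', huv'⟩ := Finset.mem_filter.mp heA
    rcases eq_or_ne v' v with rfl | hne
    · exact huv'
    have hends : s(G.fst e, G.snd e) = s(v', v) := (Sym2.mem_and_mem_iff hne).mp ⟨hv', hv⟩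
    exact huv'.trans _ _ _ (reach_of_mk_eq hends ⟨he, by grind⟩)
  have hsep : G.cycleRank.IsSeparator C A := by
    refine isSeparator_cycleRank (C.filter_subset _) (subset_trans ?_ hX)
    rintro v ⟨hvA, hvB⟩
    obtain ⟨a, ha, hav⟩ := mem_support_iff.mp hvA
    obtain ⟨b, hb, hbv⟩ := mem_support_iff.mp hvB
    obtain ⟨hbC, hbA⟩ := Finset.mem_sdiff.mp hb
    by_contra hvX
    exact hbA ((hA hbC hbv hvX).mpr ((hA (C.filter_subset _ ha) hav hvX).mp ha))
  obtain ⟨e, he, heu⟩ := mem_support_iff.mp hu.1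
  obtain ⟨f, hf, hfw⟩ := mem_support_iff.mp hw.1
  have heA : e ∈ A := (hA he heu hu.2).mpr (.refl u)
  have hAC : A = C := (hC A hsep).resolve_left (Finset.ne_empty_of_mem heA)
  exact (hA hf hfw hw.2).mp (hAC.symm ▸ hf)

lemma nonSeparable_edgeSubgraph (hC : G.cycleRank.Connected C) (hne : C.Nonempty) :
    (G.edgeSubgraph C).toMultigraph.NonSeparable := by
  rw [Subgraph.nonSeparable_iff]
  by_cases hloop : ∃ e ∈ C, G.fst e = G.snd e
  · obtain ⟨e, he, hends⟩ := hloop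
    have hsep : G.cycleRank.IsSeparator C {e} := by
      refine isSeparator_cycleRank (x := G.fst e) (by simpa using he)
        (Set.inter_subset_left.trans ?_)
      simp [support, hends]
    obtain rfl : {e} = C := (hC _ hsep).resolve_left (Finset.singleton_ne_empty e)
    exact .inl (by simp [edgeSubgraph, support, hends])
  · push Not at hloop
    obtain ⟨e, he⟩ := hne
    refine .inr ⟨⟨⟨_, fst_mem_support he⟩, fun u hu w hw => ?_⟩, hloop, fun x _ u hu w hw =>
      reach_avoiding_of_connected hC subset_rfl hu hw⟩
    exact (reach_avoiding_of_connected hC (Set.empty_subset {u}) ⟨hu, Set.notMem_empty u⟩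
      ⟨hw, Set.notMem_empty w⟩).mono (Set.sep_subset _ _)

lemma mem_of_isSeparator {A : Finset E} {a b : E} {x y z : V} (hA : G.cycleRank.IsSeparator C A)
    (ha : a ∈ A) (hb : b ∈ C) (hxy : s(G.fst a, G.snd a) = s(x, y))
    (hxz : s(G.fst b, G.snd b) = s(x, z)) (hzx : z ≠ x)
    (hyz : G.Reach (G.avoiding C {x}) y z) : b ∈ A := by
  classical
  by_contra hbA
  let Y := insert a (C.filter fun e => G.fst e ≠ x ∧ G.snd e ≠ x)
  have hYC : Y ⊆ C := Finset.insert_subset (hA.1 ha) (C.filter_subset _)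
  have hxz_reach : G.Reach Y x z :=
    (reach_of_mk_eq hxy (by simp [Y])).trans _ _ _ (hyz.mono fun e he => by
      simpa [Y] using .inr he)
  have hinter := hA.compl.rank_insert_inter (Finset.mem_sdiff.mpr ⟨hb, hbA⟩) hYC
    (cycleRank_insert_eq_iff.mpr ((reach_iff_of_mk_eq hxz).mpr hxz_reach))
  rw [cycleRank_insert_eq_iff, reach_iff_of_mk_eq hxz] at hinter
  refine hzx (hinter.eq_of_notMem_support fun hx => ?_).symm
  obtain ⟨e, he, hex⟩ := mem_support_iff.mp hx
  have : e ∈ Y ∧ e ∈ C \ A := Finset.mem_inter.mp he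
  grind

lemma connected_of_nonSeparable {H : G.Subgraph} (hH : H.toMultigraph.NonSeparable)
    (hHC : H.edges = C) : G.cycleRank.Connected C := by
  rcases C.eq_empty_or_nonempty with rfl | ⟨e, he⟩
  · exact fun A hA => .inl (Finset.subset_empty.mp hA.1)
  refine RankFunction.connected_of_forall_mem he fun A hA heA => ?_
  have hverts : H.verts = G.support C :=
    hHC ▸ Subgraph.verts_eq_support hH ⟨e, hHC ▸ he⟩
  rcases H.nonSeparable_iff.mp hH with ⟨-, hcard⟩ | ⟨⟨-, hreach⟩, hloop, havoid⟩
  · rw [hHC, Set.ncard_coe_finset, Finset.card_le_one] at hcard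
    exact hA.1.antisymm fun f hf => hcard e he f hf ▸ heA
  rw [hHC] at hreach hloop havoid
  rw [hverts] at hreach havoid
  by_contra hAC
  have hB : (C \ A).Nonempty := Finset.sdiff_nonempty.mpr fun hCA => hAC (hA.1.antisymm hCA)
  have hunion : (A : Set E) ∪ ↑(C \ A) = C := by
    rw [← Finset.coe_union, Finset.union_sdiff_of_subset hA.1]
  obtain ⟨x, hxA, hxB⟩ := exists_mem_support_inter (A := A) (B := ↑(C \ A)) ⟨e, heA⟩
    (Finset.coe_nonempty.mpr hB) (by rwa [hunion])
  obtain ⟨a, ha, y, hxy⟩ := mem_support_iff.mp hxA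
  obtain ⟨b, hb, z, hxz⟩ := mem_support_iff.mp hxB
  obtain ⟨hbC, hbA⟩ := Finset.mem_sdiff.mp hb
  have hother {f : E} {v : V} (hf : f ∈ C) (hv : s(G.fst f, G.snd f) = s(x, v)) :
      v ∈ G.support C \ {x} := by
    refine ⟨mem_support_iff.mpr ⟨f, hf, x, hv.trans Sym2.eq_swap⟩, ?_⟩
    rintro rfl
    exact hloop f hf (Sym2.mk_isDiag_iff.mp (hv ▸ Sym2.mk_isDiag_iff.mpr rfl))
  have hz := hother hbC hxz
  have hx : x ∈ G.support C := support_mono (Finset.coe_subset.mpr hA.1) hxA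
  exact hbA (mem_of_isSeparator hA ha hbC hxy hxz hz.2
    (havoid x hx y (hother (hA.1 ha) hxy) z hz))

theorem isBlock_and_nonempty_iff [Fintype E] {H : G.Subgraph} :
    IsBlock H ∧ H.edges.Nonempty ↔
      ∃ C ∈ G.cycleRank.components Finset.univ, G.edgeSubgraph C = H := by
  constructor
  · rintro ⟨⟨hH, hmax⟩, e, he⟩
    classical
    obtain ⟨C, hC, heC⟩ := G.cycleRank.exists_mem_components (Finset.mem_univ e)
    refine ⟨C, hC, ?_⟩
    rw [RankFunction.mem_components] at hC
    have hHC : H.edges.toFinset ⊆ C :=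
      ((connected_of_nonSeparable hH (Set.coe_toFinset _).symm).subset_or_disjoint hC.isSeparator
        (Finset.subset_univ _)).resolve_right
        (Finset.not_disjoint_iff.mpr ⟨e, Set.mem_toFinset.mpr he, heC⟩)
    rw [← Finset.coe_subset, Set.coe_toFinset] at hHC
    refine hmax _ (nonSeparable_edgeSubgraph hC.connected hC.nonempty) ?_ hHC
    rw [Subgraph.verts_eq_support hH ⟨e, he⟩]
    exact support_mono hHC
  · rintro ⟨C, hC, rfl⟩
    rw [RankFunction.mem_components] at hC
    refine ⟨⟨nonSeparable_edgeSubgraph hC.connected hC.nonempty, fun H hH _ hCH => ?_⟩,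
      hC.nonempty⟩
    change ↑C ⊆ H.edges at hCH
    have hHC : H.edges = C := by
      classical
      have hconn := connected_of_nonSeparable hH (Set.coe_toFinset H.edges).symm
      obtain ⟨e, he⟩ := hC.nonempty
      have := (hconn.subset_or_disjoint hC.isSeparator (Finset.subset_univ _)).resolve_right
        (Finset.not_disjoint_iff.mpr ⟨e, Set.mem_toFinset.mpr (hCH he), he⟩)
      exact (Set.toFinset_subset.mp this).antisymm hCH
    exact Subgraph.eq_edgeSubgraph hH hHC hC.nonempty

theorem card_isBlock_and_nonempty [Fintype E] (G : Multigraph V E) :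
    Nat.card {H : G.Subgraph // IsBlock H ∧ H.edges.Nonempty} =
      (G.cycleRank.components Finset.univ).card := by
  simp_rw [isBlock_and_nonempty_iff]
  have hinj : Function.Injective fun C : Finset E => G.edgeSubgraph C :=
    fun C D h => Finset.coe_injective (congrArg Subgraph.edges h)
  exact (Set.ncard_image_of_injective _ hinj).trans (Set.ncard_coe_finset _)

end Blocks

lemma edges_nonempty_of_isBlock [Finite V] [Finite E] [Nonempty E] (hG : G.Connected)
    {H : G.Subgraph} (hH : IsBlock H) : H.edges.Nonempty := by
  classical
  cases nonempty_fintype E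
  by_contra hempty
  rw [Set.not_nonempty_iff_eq_empty] at hempty
  have hverts : H.verts.Subsingleton := by
    rcases H.nonSeparable_iff.mp hH.1 with ⟨hcard, -⟩ | ⟨⟨-, hreach⟩, -⟩
    · exact Set.ncard_le_one_iff_subsingleton.mp hcard
    · exact fun u hu w hw => (hreach u hu w hw).eq_of_forall id (by simp [hempty])
  have hsupp (v : V) : v ∈ G.support Set.univ := by
    by_contra hv
    have e := Classical.arbitrary E
    have := ((connected_iff.mp hG).2 v (G.fst e)).eq_of_notMem_support hv
    exact hv (this ▸ fst_mem_support (Set.mem_univ e))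
  obtain ⟨e, he⟩ : ∃ e, H.verts ⊆ G.support {e} := by
    rcases hverts.eq_empty_or_singleton with h | ⟨v, h⟩
    · exact ⟨Classical.arbitrary E, by simp [h]⟩
    · obtain ⟨e, -, hev⟩ := mem_support_iff.mp (hsupp v)
      exact ⟨e, h.subset.trans (Set.singleton_subset_iff.mpr <|
        mem_support_iff.mpr ⟨e, Set.mem_singleton e, hev⟩)⟩
  obtain ⟨C, hC, heC⟩ := G.cycleRank.exists_mem_components (Finset.mem_univ e)
  rw [RankFunction.mem_components] at hC
  have hHC : G.edgeSubgraph C = H :=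
    hH.2 _ (nonSeparable_edgeSubgraph hC.connected hC.nonempty)
      (he.trans (support_mono (Set.singleton_subset_iff.mpr heC))) (by simp [hempty])
  exact hC.nonempty.ne_empty (Finset.coe_eq_empty.mp ((congrArg Subgraph.edges hHC).trans hempty))

section FlowPolynomial

variable [DecidableEq E] [Finite V] [Fintype E]

lemma flowPoly_eq_cycleRank_flowPoly (G : Multigraph V E) :
    G.flowPoly = G.cycleRank.flowPoly Finset.univ := by
  have hexponent (A : Finset E) : A.card + G.ncomp A - Nat.card V = G.cycleRank.nullity A := by
    have := G.cycleRank_add_ncomp A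
    have := G.cycleRank.rank_add_nullity A
    omega
  simp only [flowPoly, RankFunction.flowPoly, hexponent, Nat.card_eq_fintype_card,
    Finset.card_univ, Finset.powerset_univ]
  exact Finset.sum_congr (by ext; simp) fun _ _ => rfl

lemma Bridgeless.coloopless (hG : G.Bridgeless) : G.cycleRank.Coloopless Finset.univ := by
  intro e _
  have hcoe : (↑(Finset.univ.erase e) : Set E) = {f | f ≠ e} := by ext; simp
  have hdel := G.cycleRank_add_ncomp (Finset.univ.erase e)
  have huniv := G.cycleRank_add_ncomp Finset.univ
  rw [hcoe] at hdel
  rw [Finset.coe_univ] at huniv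
  have hle : G.ncomp {f | f ≠ e} ≤ G.ncomp Set.univ := not_lt.mp (hG e)
  have := G.cycleRank.rank_mono (Finset.erase_subset e Finset.univ)
  omega

lemma nullity_univ (G : Multigraph V E) : (G.cycleRank.nullity Finset.univ : ℤ) =
    Fintype.card E - Nat.card V + G.numComponents := by
  have hnullity := G.cycleRank.rank_add_nullity Finset.univ
  have hncomp := G.cycleRank_add_ncomp Finset.univ
  rw [Finset.coe_univ] at hncomp
  rw [Finset.card_univ] at hnullity
  rw [numComponents]
  omega

end FlowPolynomial

end Multigraph

open Multigraph in
/-- An isolated vertex is a block without edges, and contributes no root at `1`. -/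
theorem flowPoly_zero_free_Wakelin_general {V E : Type} [Fintype V] [Fintype E]
    (G : Multigraph V E) (hbl : G.Bridgeless) :
    (∀ q : ℝ, q < 1 →
      0 < (-1 : ℝ) ^ ((Fintype.card E : ℤ) - Fintype.card V + G.numComponents) *
        G.flowPoly.eval q) ∧
      G.flowPoly.rootMultiplicity 1 =
        Nat.card {H : G.Subgraph // IsBlock H ∧ H.edges.Nonempty} ∧
      (∀ q : ℝ, 1 < q → q ≤ 32 / 27 →
        0 < (-1 : ℝ) ^ ((Fintype.card E : ℤ) - Fintype.card V +
          Nat.card {H : G.Subgraph // IsBlock H ∧ H.edges.Nonempty} + G.numComponents) *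
            G.flowPoly.eval q) := by
  classical
  have hcl := hbl.coloopless
  rw [card_isBlock_and_nonempty, flowPoly_eq_cycleRank_flowPoly, add_right_comm,
    ← Nat.card_eq_fintype_card (α := V), ← nullity_univ]
  refine ⟨fun q hq => ?_, hcl.rootMultiplicity_flowPoly, fun q h1 h2 => ?_⟩
  · exact mod_cast hcl.flowPoly_sign_of_lt_one hq
  · exact mod_cast hcl.flowPoly_sign_of_one_lt h1 h2

open Multigraph in
/-- Wakelin. Let `G = (V,E)` be a bridgeless connected finite
multigraph with at least one edge, `n = |V|`, `m = |E|` and `b` blocks. Then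
(i) `(−1)^{m−n+1} F(G,q) > 0` for all real `q < 1`; (ii) `F(G,q)` has a root of
multiplicity exactly `b` at `q = 1`; (iii) `(−1)^{m−n+b+1} F(G,q) > 0` for all real
`q` with `1 < q ≤ 32/27`. -/
theorem flowPoly_zero_free_Wakelin {V E : Type} [Fintype V] [Fintype E]
    (G : Multigraph V E) (hE : Nonempty E) (hconn : G.Connected) (hbl : G.Bridgeless) :
    (∀ q : ℝ, q < 1 →
      0 < (-1 : ℝ) ^ ((Fintype.card E : ℤ) - Fintype.card V + 1) * G.flowPoly.eval q) ∧
      G.flowPoly.rootMultiplicity 1 = Nat.card {H : G.Subgraph // IsBlock H} ∧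
      (∀ q : ℝ, 1 < q → q ≤ 32 / 27 →
        0 < (-1 : ℝ) ^ ((Fintype.card E : ℤ) - Fintype.card V +
          Nat.card {H : G.Subgraph // IsBlock H} + 1) * G.flowPoly.eval q) := by
  simpa only [show G.numComponents = 1 from hconn, Nat.cast_one,
    and_iff_left_of_imp fun h => edges_nonempty_of_isBlock hconn h]
    using flowPoly_zero_free_Wakelin_general G hbl
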